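/- arXiv:1801.03508 — 3 statements merged into one kernel-verified Lean document; each statement's English description precedes it below -/
import Mathlib

section
/- For every n ≥ 1 and every dimension vector d : Fin n → ℕ with 1 ≤ d i for all i, LME states exist for d if and only if R(d) ≥ 0. -/
open scoped ComplexConjugate

noncomputable section

def rhoK {n : ℕ} (d : Fin n → ℕ) (ψ : (∀ i, Fin (d i)) → ℂ) (k : Fin n) :
    Matrix (Fin (d k)) (Fin (d k)) ℂ :=
  Matrix.of fun j l =>
    ∑ x : ∀ i, Fin (d i), if x k = j then ψ x * conj (ψ (Function.update x k l)) else 0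

def Normalized {n : ℕ} {d : Fin n → ℕ} (ψ : (∀ i, Fin (d i)) → ℂ) : Prop :=
  ∑ x, ‖ψ x‖ ^ 2 = 1

def IsLME {n : ℕ} (d : Fin n → ℕ) (ψ : (∀ i, Fin (d i)) → ℂ) : Prop :=
  Normalized ψ ∧ ∀ k, rhoK d ψ k = (1 / (d k : ℂ)) • 1

def LMEExists (n : ℕ) (d : Fin n → ℕ) : Prop := ∃ ψ, IsLME d ψ

def Nfun {n : ℕ} (k : Fin n → ℕ) : ℤ :=
  ∑ S ∈ Finset.univ.powerset.filter (fun S : Finset (Fin n) => S.Nonempty),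
    (-1 : ℤ) ^ (S.card + 1) * ((Finset.gcd S k : ℕ) : ℤ)

def Rfun {n : ℕ} (d : Fin n → ℕ) : ℤ :=
  (∏ i, (d i : ℤ)) - Nfun (fun i => (d i) ^ 2)

def Dfun {n : ℕ} (d : Fin n → ℕ) : ℤ :=
  (∏ i, (d i : ℤ)) - 1 - ∑ i, ((d i : ℤ) ^ 2 - 1)


/-! ## Arithmetic part -/

def annih (M g : ℕ) : Finset ℕ := (Finset.range M).filter (fun x => M ∣ x * g)

lemma card_annih {M g : ℕ} (hM : 0 < M) (hg : g ∣ M) : (annih M g).card = g := by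
  obtain ⟨h, rfl⟩ := hg
  have hg0 : 0 < g := Nat.pos_of_mul_pos_right hM
  have hh0 : 0 < h := Nat.pos_of_mul_pos_left hM
  have : annih (g * h) g = (Finset.range g).image (fun x => x * h) := by
    ext x
    simp only [annih, Finset.mem_filter, Finset.mem_range, Finset.mem_image]
    constructor
    · rintro ⟨h1, h2⟩
      rw [mul_comm x g] at h2
      obtain ⟨y, rfl⟩ := Nat.dvd_of_mul_dvd_mul_left hg0 h2
      refine ⟨y, ?_, by ring⟩
      rw [mul_comm h y] at h1
      exact lt_of_mul_lt_mul_right h1 (Nat.zero_le _)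
    · rintro ⟨y, hy, rfl⟩
      exact ⟨Nat.mul_lt_mul_of_pos_right hy hh0, ⟨y, by ring⟩⟩
  rw [this, Finset.card_image_of_injective, Finset.card_range]
  intro x y hxy
  exact Nat.eq_of_mul_eq_mul_right hh0 hxy

lemma Nfun_eq_card {n : ℕ} (k : Fin n → ℕ) {M : ℕ} (hM : 0 < M) (hk : ∀ i, k i ∣ M) :
    Nfun k = ((Finset.univ.biUnion (fun i => annih M (k i))).card : ℤ) := by
  rw [Finset.inclusion_exclusion_card_biUnion]
  unfold Nfun
  rw [← Finset.sum_coe_sort]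
  refine Finset.sum_congr rfl ?_
  rintro ⟨t, ht⟩ _
  have hne := (Finset.mem_filter.1 ht).2
  simp only
  congr 1
  have : t.inf' hne (fun i => annih M (k i)) = annih M (t.gcd k) := by
    ext x
    rw [Finset.mem_inf']
    simp only [annih, Finset.mem_filter, Finset.mem_range]
    constructor
    · intro h
      refine ⟨(h _ hne.choose_spec).1, ?_⟩
      have : M ∣ t.gcd (fun i => x * k i) := Finset.dvd_gcd fun i hi => (h i hi).2
      rwa [Finset.gcd_mul_left, normalize_eq] at this
    · rintro ⟨h1, h2⟩ i hi
      exact ⟨h1, h2.trans (Nat.mul_dvd_mul_left _ (Finset.gcd_dvd hi))⟩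
  rw [this, card_annih hM]
  exact (Finset.gcd_dvd hne.choose_spec).trans (hk _)

lemma annih_mono {M g h : ℕ} (hgh : g ∣ h) : annih M g ⊆ annih M h := by
  intro x
  simp only [annih, Finset.mem_filter, Finset.mem_range]
  rintro ⟨h1, h2⟩
  exact ⟨h1, h2.trans (Nat.mul_dvd_mul_left _ hgh)⟩

lemma Nfun_ge {n : ℕ} (k : Fin n → ℕ) (hk : ∀ i, 1 ≤ k i) (i : Fin n) :
    (k i : ℤ) ≤ Nfun k := by
  have hM : 0 < ∏ i, k i := Finset.prod_pos fun i _ => hk i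
  have hd : ∀ i, k i ∣ ∏ i, k i := fun i => Finset.dvd_prod_of_mem _ (Finset.mem_univ i)
  rw [Nfun_eq_card k hM hd, ← card_annih hM (hd i)]
  exact_mod_cast Finset.card_le_card (Finset.subset_biUnion_of_mem
    (fun i => annih (∏ i, k i) (k i)) (Finset.mem_univ i))

lemma Nfun_mono {n m : ℕ} (k : Fin n → ℕ) (k' : Fin m → ℕ) (hk' : ∀ i, 1 ≤ k' i)
    (p : Fin n → Fin m) (h : ∀ i, k i ∣ k' (p i)) : Nfun k ≤ Nfun k' := by
  have hM : 0 < ∏ i, k' i := Finset.prod_pos fun i _ => hk' i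
  have hd : ∀ i, k' i ∣ ∏ i, k' i := fun i => Finset.dvd_prod_of_mem _ (Finset.mem_univ i)
  rw [Nfun_eq_card k' hM hd, Nfun_eq_card k hM (fun i => (h i).trans (hd _))]
  norm_cast
  apply Finset.card_le_card
  intro x
  simp only [Finset.mem_biUnion, Finset.mem_univ, true_and]
  rintro ⟨i, hi⟩
  exact ⟨p i, annih_mono (h i) hi⟩

lemma Nfun_le_sum {n : ℕ} (k : Fin n → ℕ) (hk : ∀ i, 1 ≤ k i) :
    Nfun k ≤ 1 + ∑ i, ((k i : ℤ) - 1) := by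
  have hM : 0 < ∏ i, k i := Finset.prod_pos fun i _ => hk i
  have hd : ∀ i, k i ∣ ∏ i, k i := fun i => Finset.dvd_prod_of_mem _ (Finset.mem_univ i)
  rw [Nfun_eq_card k hM hd]
  set M := ∏ i, k i
  have h0 : ∀ i, 0 ∈ annih M (k i) := by
    intro i; simp [annih, hM]
  have hsub : Finset.univ.biUnion (fun i => annih M (k i)) ⊆
      insert 0 (Finset.univ.biUnion (fun i => (annih M (k i)).erase 0)) := by
    intro x
    simp only [Finset.mem_biUnion, Finset.mem_univ, true_and, Finset.mem_insert, Finset.mem_erase]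
    rintro ⟨i, hi⟩
    by_cases hx : x = 0
    · exact Or.inl hx
    · exact Or.inr ⟨i, hx, hi⟩
  have h1 := (Finset.card_le_card hsub).trans (Finset.card_insert_le _ _)
  have h2 : (Finset.univ.biUnion (fun i => (annih M (k i)).erase 0)).card ≤
      ∑ i, (k i - 1) := by
    refine Finset.card_biUnion_le.trans (le_of_eq (Finset.sum_congr rfl fun i _ => ?_))
    rw [Finset.card_erase_of_mem (h0 i), card_annih hM (hd i)]
  have h3 : ((∑ i, (k i - 1) : ℕ) : ℤ) = ∑ i, ((k i : ℤ) - 1) := by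
    push_cast
    refine Finset.sum_congr rfl fun i _ => ?_
    rw [Nat.cast_sub (hk i)]; simp
  rw [← h3]
  have := h1.trans (Nat.add_le_add_right h2 1)
  rw [add_comm]
  exact_mod_cast this

/-- product of the other dimensions -/
def othr {n : ℕ} (d : Fin n → ℕ) (k : Fin n) : ℕ := ∏ i ∈ Finset.univ.erase k, d i

lemma mul_othr {n : ℕ} (d : Fin n → ℕ) (k : Fin n) : d k * othr d k = ∏ i, d i :=
  Finset.mul_prod_erase _ _ (Finset.mem_univ k)

lemma othr_update {n : ℕ} (d : Fin n → ℕ) (k : Fin n) (c : ℕ) :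
    othr (Function.update d k c) k = othr d k := by
  refine Finset.prod_congr rfl fun i hi => ?_
  rw [Function.update_of_ne (Finset.ne_of_mem_erase hi)]

lemma Rfun_eq {n : ℕ} (d : Fin n → ℕ) (k : Fin n) :
    Rfun d = (d k : ℤ) * othr d k - Nfun (fun i => d i ^ 2) := by
  unfold Rfun
  rw [← Nat.cast_mul, mul_othr]; push_cast; rfl

lemma Rfun_neg {n : ℕ} (d : Fin n → ℕ) (hd : ∀ i, 1 ≤ d i) (k : Fin n)
    (h : othr d k < d k) : Rfun d < 0 := by
  rw [Rfun_eq d k]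
  have := Nfun_ge (fun i => d i ^ 2) (fun i => Nat.one_le_pow _ _ (hd i)) k
  push_cast at this
  have h2 : (othr d k : ℤ) + 1 ≤ d k := by exact_mod_cast h
  have h3 : (1 : ℤ) ≤ d k := by exact_mod_cast hd k
  nlinarith

lemma Rfun_full {n : ℕ} (d : Fin n → ℕ) (hd : ∀ i, 1 ≤ d i) (k : Fin n)
    (h : d k = othr d k) : 0 ≤ Rfun d := by
  rw [Rfun_eq d k]
  have := Nfun_mono (fun i => d i ^ 2) (fun _ : Fin 1 => d k ^ 2)
    (fun i => Nat.one_le_pow _ _ (hd k)) (fun _ => 0) (by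
      intro i
      apply pow_dvd_pow_of_dvd
      by_cases hi : i = k
      · rw [hi]
      · rw [h]
        exact Finset.dvd_prod_of_mem _ (by simp [hi]))
  have h2 := Nfun_le_sum (fun _ : Fin 1 => d k ^ 2) (fun i => Nat.one_le_pow _ _ (hd k))
  simp only [Finset.univ_unique, Finset.sum_const, Finset.card_singleton, one_smul] at h2
  push_cast at h2
  rw [← h]
  linarith [this, h2, sq (d k : ℤ)]

lemma gcd_sq {n : ℕ} (S : Finset (Fin n)) (d : Fin n → ℕ) :
    S.gcd (fun i => d i ^ 2) = (S.gcd d) ^ 2 := by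
  induction S using Finset.induction_on with
  | empty => simp
  | insert a s ha ih =>
    rw [Finset.gcd_insert, Finset.gcd_insert, ih]
    exact (Nat.pow_gcd_pow).symm ▸ rfl

lemma Rfun_castle {n : ℕ} (d : Fin n → ℕ) (k : Fin n) (h : d k ≤ othr d k) :
    Rfun (Function.update d k (othr d k - d k)) = Rfun d := by
  rw [Rfun_eq _ k, Rfun_eq d k, othr_update, Function.update_self]
  have key : Nfun (fun i => Function.update d k (othr d k - d k) i ^ 2) - ((othr d k - d k : ℕ) : ℤ) ^ 2
      = Nfun (fun i => d i ^ 2) - (d k : ℤ) ^ 2 := by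
    unfold Nfun
    have hm : ({k} : Finset (Fin n)) ∈ Finset.univ.powerset.filter
        (fun S : Finset (Fin n) => S.Nonempty) := by simp
    rw [← Finset.add_sum_erase _ _ hm, ← Finset.add_sum_erase _ _ hm]
    simp only [Finset.card_singleton, Finset.gcd_singleton, Function.update_self, normalize_eq]
    have : ∀ S ∈ (Finset.univ.powerset.filter
        (fun S : Finset (Fin n) => S.Nonempty)).erase {k},
        S.gcd (fun i => Function.update d k (othr d k - d k) i ^ 2) = S.gcd (fun i => d i ^ 2) := by
      intro S hS
      rw [gcd_sq, gcd_sq]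
      congr 1
      by_cases hk : k ∈ S
      · rw [← Finset.insert_erase hk, Finset.gcd_insert, Finset.gcd_insert, Function.update_self]
        have e1 : (S.erase k).gcd (Function.update d k (othr d k - d k)) = (S.erase k).gcd d := by
          refine Finset.gcd_congr rfl fun i hi => ?_
          rw [Function.update_of_ne (Finset.ne_of_mem_erase hi)]
        rw [e1]
        have e2 : (S.erase k).gcd d ∣ othr d k := by
          have : (S.erase k).Nonempty := by
            rw [Finset.nonempty_iff_ne_empty]
            intro he
            rw [Finset.erase_eq_empty_iff] at he
            simp only [Finset.mem_erase, Finset.mem_filter] at hS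
            rcases he with he | he
            · rw [he] at hk; simp at hk
            · exact hS.1 he
          obtain ⟨i, hi⟩ := this
          refine (Finset.gcd_dvd hi).trans (Finset.dvd_prod_of_mem _ ?_)
          simp [Finset.ne_of_mem_erase hi]
        show Nat.gcd _ _ = Nat.gcd _ _
        apply Nat.dvd_antisymm
        · apply Nat.dvd_gcd _ (Nat.gcd_dvd_right _ _)
          exact (Nat.dvd_sub_iff_right h ((Nat.gcd_dvd_right _ _).trans e2)).1 (Nat.gcd_dvd_left _ _)
        · apply Nat.dvd_gcd _ (Nat.gcd_dvd_right _ _)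
          exact Nat.dvd_sub ((Nat.gcd_dvd_right _ _).trans e2) (Nat.gcd_dvd_left _ _)
      · refine Finset.gcd_congr rfl fun i hi => ?_
        rw [Function.update_of_ne]
        rintro rfl; exact hk hi
    rw [Finset.sum_congr rfl (fun S hS => by rw [this S hS])]
    push_cast
    ring
  rw [Nat.cast_sub h] at key ⊢
  linarith [mul_self_nonneg (d k : ℤ)]

lemma Rfun_merge {n m : ℕ} (d : Fin n → ℕ) (d' : Fin m → ℕ) (hd' : ∀ i, 1 ≤ d' i)
    (p : Fin n → Fin m) (h : ∀ k, d' k = ∏ i with p i = k, d i) (hR : 0 ≤ Rfun d') :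
    0 ≤ Rfun d := by
  have h1 : Nfun (fun i => d i ^ 2) ≤ Nfun (fun i => d' i ^ 2) := by
    refine Nfun_mono _ _ (fun i => Nat.one_le_pow _ _ (hd' i)) p fun i => ?_
    apply pow_dvd_pow_of_dvd
    rw [h]
    exact Finset.dvd_prod_of_mem _ (by simp)
  have h2 : ∏ i, d' i = ∏ i, d i := by
    simp_rw [h]
    exact Finset.prod_fiberwise _ _ _
  have h3 : (∏ i, (d' i : ℤ)) = ∏ i, (d i : ℤ) := by exact_mod_cast h2
  unfold Rfun at *
  linarith

lemma Rfun_three {a b c : ℕ} (ha : 2 ≤ a) (hab : a ≤ b) (hbc : b ≤ c) (hc : 2 * c ≤ a * b) :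
    0 ≤ Rfun ![a, b, c] := by
  have hpos : ∀ i : Fin 3, 1 ≤ (fun i => (![a, b, c] : Fin 3 → ℕ) i ^ 2) i := by
    intro i
    apply Nat.one_le_pow
    fin_cases i <;> simp <;> omega
  rcases Nat.eq_or_lt_of_le ha with rfl | ha3
  · have hcb : c = b := by omega
    subst hcb
    have h1 := Nfun_mono (fun i => (![2, c, c] : Fin 3 → ℕ) i ^ 2)
      (![2 ^ 2, c ^ 2] : Fin 2 → ℕ) (by
        intro i; fin_cases i
        · simp
        · simpa using Nat.one_le_pow 2 c (by omega)) ![0, 1, 1] (by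
        intro i; fin_cases i <;> simp)
    have h2 := Nfun_le_sum (![2 ^ 2, c ^ 2] : Fin 2 → ℕ) (by
        intro i; fin_cases i
        · simp
        · simpa using Nat.one_le_pow 2 c (by omega))
    unfold Rfun
    simp [Fin.sum_univ_two] at h2
    have : (2 : ℤ) ≤ c := by exact_mod_cast hab
    simp only [Fin.prod_univ_three]
    simp at *
    nlinarith
  · have h2 := Nfun_le_sum _ hpos
    unfold Rfun
    simp only [Fin.sum_univ_three, Fin.prod_univ_three] at *
    simp at *
    zify at *
    have h3 : (b : ℤ) * (a * b - b) ≤ c * (a * b - c) := by nlinarith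
    have h4 : (a : ℤ) ^ 2 ≤ b ^ 2 := by nlinarith
    have h5 : (b : ℤ) ^ 2 * 1 ≤ b ^ 2 * (a - 2) := by
      apply mul_le_mul_of_nonneg_left <;> nlinarith
    nlinarith
set_option linter.unusedSectionVars false
set_option linter.unusedSimpArgs false

/-! ## Quantum part -/

section Quantum

variable {ι : Type} [Fintype ι] [DecidableEq ι]

/-- partial trace onto the coordinate `k` -/
def marg {A : ι → Type} [∀ i, Fintype (A i)] [∀ i, DecidableEq (A i)]
    (M : (∀ i, A i) → (∀ i, A i) → ℂ) (k : ι) (p q : A k) : ℂ :=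
  ∑ x : ∀ i, A i, if x k = p then M x (Function.update x k q) else 0

def LMEx (A : ι → Type) [∀ i, Fintype (A i)] [∀ i, DecidableEq (A i)] : Prop :=
  ∃ ψ : (∀ i, A i) → ℂ, ∀ k p q, marg (fun x y => ψ x * conj (ψ y)) k p q =
    if p = q then 1 / (Fintype.card (A k) : ℂ) else 0

lemma LMEx_transport {A B : ι → Type} [∀ i, Fintype (A i)] [∀ i, DecidableEq (A i)]
    [∀ i, Fintype (B i)] [∀ i, DecidableEq (B i)] (e : ∀ i, A i ≃ B i) (h : LMEx A) :
    LMEx B := by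
  obtain ⟨ψ, hψ⟩ := h
  refine ⟨fun x => ψ (fun i => (e i).symm (x i)), fun k p q => ?_⟩
  have := hψ k ((e k).symm p) ((e k).symm q)
  simp only [EmbeddingLike.apply_eq_iff_eq] at this
  rw [← Fintype.card_congr (e k), ← this]
  unfold marg
  refine (Fintype.sum_equiv (Equiv.piCongrRight e) _ _ fun x => ?_).symm
  simp only [Equiv.piCongrRight_apply, Pi.map_apply, Equiv.symm_apply_apply]
  by_cases hx : x k = (e k).symm p
  · have h' : e k (x k) = p := by rw [hx]; simp
    rw [if_pos hx, if_pos h']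
    congr 3
    funext i
    by_cases hi : i = k
    · subst hi; simp
    · simp [Function.update_of_ne hi]
  · have h' : ¬ e k (x k) = p := by
      intro h; apply hx; rw [← h]; simp
    rw [if_neg hx, if_neg h']

abbrev Grp {κ : Type} (p : ι → κ) (A : ι → Type) (j : κ) : Type := ∀ i : {i // p i = j}, A i

lemma card_fix {A : ι → Type} [∀ i, Fintype (A i)] [∀ i, DecidableEq (A i)]
    [∀ i, Nonempty (A i)] (k : ι) (a : A k) :
    (∑ u : ∀ i, A i, if u k = a then 1 / (Fintype.card (∀ i, A i) : ℂ) else 0) =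
      1 / (Fintype.card (A k) : ℂ) := by
  have h1 := Fintype.sum_equiv (Equiv.piSplitAt k A)
    (fun u => if u k = a then 1 / (Fintype.card (∀ i, A i) : ℂ) else 0)
    (fun y => if y.1 = a then
    1 / (Fintype.card (∀ i, A i) : ℂ) else 0) (fun x => rfl)
  rw [h1, Fintype.sum_prod_type,
    Fintype.card_congr (Equiv.piSplitAt k A), Fintype.card_prod]
  have h2 : (Fintype.card (∀ j : {j // j ≠ k}, A j) : ℂ) ≠ 0 := by
    exact_mod_cast Fintype.card_ne_zero
  rw [Finset.sum_eq_single a (by intro x _ hx; simp [hx]) (by simp)]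
  simp only [if_true]
  rw [Finset.sum_const, Finset.card_univ, nsmul_eq_mul]; push_cast
  rw [mul_one_div, mul_comm, div_mul_cancel_left₀ h2, one_div]

lemma LMEx_merge {κ : Type} [Fintype κ] [DecidableEq κ]
    {A : ι → Type} [∀ i, Fintype (A i)] [∀ i, DecidableEq (A i)] [∀ i, Nonempty (A i)]
    (p : ι → κ) (h : LMEx (Grp p A)) : LMEx A := by
  obtain ⟨ψ, hψ⟩ := h
  let e : (∀ i, A i) ≃ (∀ k, Grp p A k) :=
    { toFun := fun x k i => x i
      invFun := fun y i => y (p i) ⟨i, rfl⟩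
      left_inv := fun x => rfl
      right_inv := fun y => by
        funext k i
        obtain ⟨i, rfl⟩ := i
        rfl }
  refine ⟨fun x => ψ (e x), fun k a b => ?_⟩
  let k' : {i // p i = p k} := ⟨k, rfl⟩
  have key : marg (fun x y => ψ (e x) * conj (ψ (e y))) k a b =
      ∑ u : Grp p A (p k), if u k' = a then
        marg (A := Grp p A) (fun x y => ψ x * conj (ψ y)) (p k) u (Function.update u k' b) else 0 := by
    unfold marg
    rw [Fintype.sum_equiv e _ (fun y => if y (p k) k' = a then
      ψ y * conj (ψ (Function.update y (p k) (Function.update (y (p k)) k' b))) else 0)]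
    · have h1 : ∀ u : Grp p A (p k), (if u k' = a then
          ∑ x : ∀ k, Grp p A k, (if x (p k) = u then ψ x * conj (ψ (Function.update x (p k) (Function.update u k' b))) else 0) else 0)
          = ∑ x : ∀ k, Grp p A k, if x (p k) = u then (if x (p k) k' = a then ψ x * conj (ψ (Function.update x (p k) (Function.update (x (p k)) k' b))) else 0) else 0 := by
        intro u
        split_ifs with hu
        · refine Finset.sum_congr rfl fun x _ => ?_
          by_cases hx : x (p k) = u
          · subst hx; simp [hu]
          · simp [hx]
        · symm
          refine Finset.sum_eq_zero fun x _ => ?_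
          by_cases hx : x (p k) = u
          · subst hx; simp [hu]
          · simp [hx]
      rw [Finset.sum_congr rfl fun u _ => h1 u, Finset.sum_comm]
      refine Finset.sum_congr rfl fun x _ => ?_
      simp
    · intro x
      have : e (Function.update x k b) =
          Function.update (e x) (p k) (Function.update (e x (p k)) k' b) := by
        apply e.symm.injective
        rw [Equiv.symm_apply_apply]
        funext i
        show _ = Function.update (e x) (p k) (Function.update (e x (p k)) k' b) (p i) ⟨i, rfl⟩
        by_cases hj : p i = p k
        · have : ∀ (j : κ) (hj : p i = j) (f : Grp p A j), 
              Function.update (e x) j f (p i) ⟨i, rfl⟩ = f ⟨i, hj⟩ := by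
            rintro j rfl f; simp
          rw [this _ hj]
          by_cases hi : i = k
          · subst hi; simp [k']
          · rw [Function.update_of_ne hi, Function.update_of_ne (by simpa [k'] using hi)]; rfl
        · rw [Function.update_of_ne hj]
          show Function.update x k b i = x i
          rw [Function.update_of_ne]
          rintro rfl; exact hj rfl
      show (if x k = a then ψ (e x) * conj (ψ (e (Function.update x k b))) else 0) = _
      rw [this]
      rfl
  refine key.trans ?_
  simp_rw [hψ]
  split_ifs with hab
  · subst hab
    refine Eq.trans ?_ (card_fix (A := fun i : {i // p i = p k} => A i) k' a)
    refine Finset.sum_congr rfl fun u _ => ?_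
    by_cases hu : u k' = a
    · rw [if_pos hu, if_pos hu, if_pos]
      rw [← hu]; simp
    · rw [if_neg hu, if_neg hu]
  · apply Finset.sum_eq_zero
    intro u _
    by_cases hu : u k' = a
    · rw [if_pos hu, if_neg]
      intro h
      have := congrFun h k'
      simp at this
      exact hab (hu.symm.trans this)
    · rw [if_neg hu]

lemma proj_factor {Z B : Type} [Fintype Z] [DecidableEq Z] [Fintype B] [DecidableEq B]
    (P : Matrix Z Z ℂ) (hP : P.IsHermitian) (hPP : P * P = P)
    (htr : P.trace = (Fintype.card B : ℂ)) :
    ∃ W : Matrix Z B ℂ, W.conjTranspose * W = 1 ∧ W * W.conjTranspose = P := by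
  have hlam : ∀ i, hP.eigenvalues i = 0 ∨ hP.eigenvalues i = 1 := by
    intro i
    have h1 := hP.mulVec_eigenvectorBasis i
    have h2 := congrArg (fun v => P.mulVec v) h1
    simp only [Matrix.mulVec_mulVec, hPP, Matrix.mulVec_smul] at h2
    rw [h1, smul_smul] at h2
    have h3 : ∃ z, (hP.eigenvectorBasis i) z ≠ 0 := by
      by_contra! h
      apply hP.eigenvectorBasis.toBasis.ne_zero i
      ext z; simpa using h z
    obtain ⟨z, hz⟩ := h3
    have h4 := congrFun h2 z
    simp only [Pi.smul_apply, Complex.real_smul] at h4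
    have h5 := mul_right_cancel₀ hz h4
    have h6 : hP.eigenvalues i = hP.eigenvalues i * hP.eigenvalues i := by
      have h7 : ((hP.eigenvalues i : ℝ) : ℂ) = ((hP.eigenvalues i * hP.eigenvalues i : ℝ) : ℂ) := h5
      exact Complex.ofReal_injective h7
    rcases eq_or_ne (hP.eigenvalues i) 0 with h | h
    · exact Or.inl h
    · right
      exact (mul_right_cancel₀ h (by rw [one_mul]; exact h6)).symm
  have hcard : Fintype.card B = Fintype.card {i // hP.eigenvalues i = 1} := by
    have h1 := hP.trace_eq_sum_eigenvalues
    rw [htr] at h1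
    have h2 : (Fintype.card B : ℝ) = ∑ i, hP.eigenvalues i := by
      have : ((Fintype.card B : ℝ) : ℂ) = ((∑ i, hP.eigenvalues i : ℝ) : ℂ) := by
        push_cast; rw [h1]; rfl
      exact_mod_cast this
    have h3 : ∑ i, hP.eigenvalues i = ∑ i, if hP.eigenvalues i = 1 then (1:ℝ) else 0 := by
      refine Finset.sum_congr rfl fun i _ => ?_
      rcases hlam i with h | h <;> simp [h]
    rw [h3, Finset.sum_boole] at h2
    rw [Fintype.card_subtype]
    exact_mod_cast h2
  let f : B ≃ {i // hP.eigenvalues i = 1} := Fintype.equivOfCardEq hcard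
  let U : Matrix Z Z ℂ := (hP.eigenvectorUnitary : Matrix Z Z ℂ)
  have hU : U.conjTranspose * U = 1 := by
    have := Matrix.UnitaryGroup.star_mul_self hP.eigenvectorUnitary
    exact this
  have hS : P = U * Matrix.diagonal (fun i => ((hP.eigenvalues i : ℝ) : ℂ)) * U.conjTranspose := by
    have := hP.spectral_theorem
    rw [Unitary.conjStarAlgAut_apply] at this
    exact this
  refine ⟨Matrix.of fun z b => U z (f b), ?_, ?_⟩
  · ext b b'
    have := congrFun (congrFun hU (f b)) (f b')
    rw [Matrix.mul_apply] at this ⊢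
    simp only [Matrix.conjTranspose_apply, Matrix.of_apply] at this ⊢
    rw [this, Matrix.one_apply, Matrix.one_apply]
    simp [Subtype.val_inj]
  · ext z z'
    conv_rhs => rw [hS]
    rw [Matrix.mul_apply, Matrix.mul_apply]
    simp only [Matrix.mul_diagonal, Matrix.conjTranspose_apply, Matrix.of_apply]
    rw [Fintype.sum_equiv f _ (fun i => U z i * star (U z' i)) (fun b => rfl)]
    rw [← Finset.sum_subtype (Finset.univ.filter (fun i => hP.eigenvalues i = 1))
      (by simp) (fun i => U z i * star (U z' i)), Finset.sum_filter]
    refine Finset.sum_congr rfl fun i _ => ?_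
    rcases hlam i with h | h <;> simp [h]

abbrev Rest (A : ι → Type) (k : ι) : Type := ∀ j : {j // j ≠ k}, A j

def ProjEx (A : ι → Type) [∀ i, Fintype (A i)] [∀ i, DecidableEq (A i)] (k : ι) (c : ℕ) : Prop :=
  ∃ P : Matrix (Rest A k) (Rest A k) ℂ, P.IsHermitian ∧ P * P = P ∧ P.trace = (c : ℂ) ∧
    ∀ j p q, marg (A := fun j : {j // j ≠ k} => A j) P j p q =
      if p = q then (c : ℂ) / (Fintype.card (A j) : ℂ) else 0

section split
variable {A : ι → Type} [∀ i, Fintype (A i)] [∀ i, DecidableEq (A i)]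

def mk (k : ι) (b : A k) (z : Rest A k) : ∀ i, A i := (Equiv.piSplitAt k A).symm (b, z)

lemma mk_self (k : ι) (b : A k) (z : Rest A k) : mk k b z k = b := by
  simp [mk, Equiv.piSplitAt]

lemma mk_ne (k : ι) (b : A k) (z : Rest A k) (j : {j // j ≠ k}) : mk k b z j = z j := by
  simp [mk, Equiv.piSplitAt, j.2]

lemma update_mk_self (k : ι) (b q : A k) (z : Rest A k) :
    Function.update (mk k b z) k q = mk k q z := by
  funext i
  by_cases hi : i = k
  · subst hi; simp [mk_self]
  · rw [Function.update_of_ne hi, mk_ne k b z ⟨i, hi⟩, mk_ne k q z ⟨i, hi⟩]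

lemma update_mk_ne (k : ι) (b : A k) (z : Rest A k) (j : {j // j ≠ k}) (q : A j) :
    Function.update (mk k b z) j q = mk k b (Function.update z j q) := by
  funext i
  by_cases hi : i = k
  · subst hi; rw [Function.update_of_ne (Ne.symm j.2)]; simp [mk_self]
  · rw [mk_ne k b _ ⟨i, hi⟩]
    by_cases hj : i = j
    · subst hj; simp
    · rw [Function.update_of_ne hj, Function.update_of_ne (by simpa [Subtype.ext_iff] using hj), mk_ne k b z ⟨i, hi⟩]

lemma sum_mk (k : ι) (F : (∀ i, A i) → ℂ) : ∑ x, F x = ∑ b, ∑ z, F (mk k b z) := by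
  rw [← Fintype.sum_prod_type']
  refine Fintype.sum_equiv (Equiv.piSplitAt k A) _ _ fun x => ?_
  show F x = F (mk k (Equiv.piSplitAt k A x).1 (Equiv.piSplitAt k A x).2)
  unfold mk
  rw [Prod.mk.eta, Equiv.symm_apply_apply]

lemma marg_self (M : (∀ i, A i) → (∀ i, A i) → ℂ) (k : ι) (p q : A k) :
    marg M k p q = ∑ z, M (mk k p z) (mk k q z) := by
  unfold marg
  rw [sum_mk k]
  simp_rw [mk_self, update_mk_self, Finset.sum_ite_irrel, Finset.sum_const_zero]
  simp

lemma marg_ne (M : (∀ i, A i) → (∀ i, A i) → ℂ) (k : ι) (j : {j // j ≠ k}) (p q : A j) :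
    marg M j p q = marg (A := fun j : {j // j ≠ k} => A j)
      (fun z z' => ∑ b, M (mk k b z) (mk k b z')) j p q := by
  unfold marg
  rw [sum_mk k, Finset.sum_comm]
  simp_rw [mk_ne, update_mk_ne, Finset.sum_ite_irrel, Finset.sum_const_zero]

lemma marg_smul (M : (∀ i, A i) → (∀ i, A i) → ℂ) (t : ℂ) (k : ι) (p q : A k) :
    marg (fun x y => t * M x y) k p q = t * marg M k p q := by
  simp [marg, Finset.mul_sum]

lemma proj_of_lme [∀ i, Nonempty (A i)] (k : ι) (h : LMEx A) : ProjEx A k (Fintype.card (A k)) := by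
  obtain ⟨ψ, hψ⟩ := h
  set c : ℂ := (Fintype.card (A k) : ℂ) with hc
  have hc0 : c ≠ 0 := by rw [hc]; exact_mod_cast Fintype.card_ne_zero
  let W : Matrix (Rest A k) (A k) ℂ := fun z b => ψ (mk k b z)
  have hW : W.conjTranspose * W = (1 / c) • 1 := by
    ext p q
    have := hψ k q p
    rw [marg_self] at this
    rw [Matrix.mul_apply, Matrix.smul_apply, Matrix.one_apply]
    simp only [Matrix.conjTranspose_apply]
    rw [smul_ite, smul_zero, smul_eq_mul, mul_one]
    simp_rw [eq_comm (a := p) (b := q)]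
    rw [← this]
    refine Finset.sum_congr rfl fun z _ => ?_
    rw [mul_comm]; rfl
  refine ⟨c • (W * W.conjTranspose), ?_, ?_, ?_, ?_⟩
  · unfold Matrix.IsHermitian
    rw [Matrix.conjTranspose_smul, Matrix.conjTranspose_mul, Matrix.conjTranspose_conjTranspose]
    congr 1
    simp [hc]
  · rw [Matrix.smul_mul, Matrix.mul_smul, Matrix.mul_assoc, ← Matrix.mul_assoc W.conjTranspose, hW]
    simp [hc0]
  · rw [Matrix.trace_smul, Matrix.trace_mul_comm, hW]
    simp only [Matrix.trace_smul, Matrix.trace_one, smul_eq_mul, ← hc]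
    field_simp
  · intro j p q
    have := hψ j p q
    rw [marg_ne _ k] at this
    have h2 := marg_smul (A := fun j : {j // j ≠ k} => A j)
      (fun z z' => ∑ b, ψ (mk k b z) * conj (ψ (mk k b z'))) c j p q
    rw [this] at h2
    refine Eq.trans ?_ (h2.trans ?_)
    · rfl
    · rw [mul_ite, mul_zero, mul_one_div]

lemma lme_of_proj [∀ i, Nonempty (A i)] (k : ι) (h : ProjEx A k (Fintype.card (A k))) : LMEx A := by
  obtain ⟨P, hP, hPP, htr, hm⟩ := h
  obtain ⟨W, hW1, hW2⟩ := proj_factor (B := A k) P hP hPP htr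
  set c : ℂ := (Fintype.card (A k) : ℂ) with hc
  have hc0 : c ≠ 0 := by rw [hc]; exact_mod_cast Fintype.card_ne_zero
  let s : ℂ := ((Real.sqrt (Fintype.card (A k) : ℝ) : ℝ) : ℂ)⁻¹
  have hs : s * conj s = 1 / c := by
    simp only [s, map_inv₀, Complex.conj_ofReal]
    rw [← mul_inv, ← Complex.ofReal_mul, Real.mul_self_sqrt (by positivity), one_div]
    simp [hc]
  have e : ∀ b z, (Equiv.piSplitAt k A) (mk k b z) = (b, z) := by intro b z; simp [mk]
  refine ⟨fun x => s * W ((Equiv.piSplitAt k A x).2) ((Equiv.piSplitAt k A x).1), fun j p q => ?_⟩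
  by_cases hj : j = k
  · subst hj
    rw [marg_self]
    have := congrFun (congrFun hW1 q) p
    rw [Matrix.mul_apply, Matrix.one_apply] at this
    simp only [Matrix.conjTranspose_apply] at this
    simp_rw [e, eq_comm (a := p) (b := q)]
    have h2 : ∑ z, s * W z p * conj (s * W z q) = (1 / c) * ∑ z, star (W z q) * W z p := by
      rw [Finset.mul_sum]
      refine Finset.sum_congr rfl fun z _ => ?_
      rw [map_mul, ← hs, starRingEnd_apply (W z q)]; ring
    rw [h2, this, mul_ite, mul_zero, mul_one]
  · have h3 := marg_ne (fun x y => (s * W ((Equiv.piSplitAt k A x).2) ((Equiv.piSplitAt k A x).1)) * conj (s * W ((Equiv.piSplitAt k A y).2) ((Equiv.piSplitAt k A y).1))) k ⟨j, hj⟩ p q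
    refine h3.trans ?_
    simp_rw [e]
    have h4 : (fun z z' : Rest A k => ∑ b, s * W z b * conj (s * W z' b)) =
        fun z z' => (1 / c) * P z z' := by
      funext z z'
      rw [← hW2, Matrix.mul_apply, Finset.mul_sum]
      refine Finset.sum_congr rfl fun b _ => ?_
      rw [map_mul, ← hs, Matrix.conjTranspose_apply, starRingEnd_apply (W z' b)]; ring
    have h5 := marg_smul (A := fun j : {j // j ≠ k} => A j) P (1 / c) ⟨j, hj⟩ p q
    rw [h4]
    refine h5.trans ?_
    rw [hm, mul_ite, mul_zero, one_div_mul_eq_div, div_div_cancel_left' hc0, one_div]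

lemma proj_le (k : ι) (c : ℕ) (h : ProjEx A k c) : c ≤ Fintype.card (Rest A k) := by
  obtain ⟨P, hP, hPP, htr, hm⟩ := h
  obtain ⟨W, hW1, hW2⟩ := proj_factor (B := Fin c) P hP hPP (by simpa using htr)
  have h1 : (1 : Matrix (Fin c) (Fin c) ℂ).rank ≤ W.rank := by
    rw [← hW1]; exact Matrix.rank_mul_le_right _ _
  rw [Matrix.rank_one] at h1
  simpa using h1.trans (Matrix.rank_le_card_height W)

lemma marg_one [∀ i, Nonempty (A i)] (k : ι) (p q : A k) :
    marg (fun x y => (1 : Matrix (∀ i, A i) (∀ i, A i) ℂ) x y) k p q =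
    if p = q then (Fintype.card (∀ i, A i) : ℂ) / (Fintype.card (A k) : ℂ) else 0 := by
  have hc : (Fintype.card (∀ i, A i) : ℂ) ≠ 0 := by exact_mod_cast Fintype.card_ne_zero
  have h := card_fix k p
  have : ∀ x : ∀ i, A i, x k = p → ((x = Function.update x k q) ↔ p = q) := by
    intro x hx
    rw [Function.eq_update_iff] ; simp [hx]
  unfold marg
  simp only [Matrix.one_apply]
  split_ifs with hpq
  · rw [← mul_one_div, ← h, Finset.mul_sum]
    refine Finset.sum_congr rfl fun x _ => ?_
    by_cases hx : x k = p
    · rw [if_pos hx, if_pos ((this x hx).2 hpq), if_pos hx, mul_one_div_cancel hc]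
    · simp [hx]
  · refine Finset.sum_eq_zero fun x _ => ?_
    by_cases hx : x k = p
    · rw [if_pos hx, if_neg (fun h => hpq ((this x hx).1 h))]
    · simp [hx]

lemma proj_full [∀ i, Nonempty (A i)] (k : ι) : ProjEx A k (Fintype.card (Rest A k)) := by
  refine ⟨1, Matrix.isHermitian_one, by simp, by simp, fun j p q => ?_⟩
  exact marg_one (A := fun j : {j // j ≠ k} => A j) j p q

lemma proj_compl [∀ i, Nonempty (A i)] (k : ι) (c c' : ℕ) (hc : c + c' = Fintype.card (Rest A k))
    (h : ProjEx A k c) : ProjEx A k c' := by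
  obtain ⟨P, hP, hPP, htr, hm⟩ := h
  have hc' : (c' : ℂ) = (Fintype.card (Rest A k) : ℂ) - c := by rw [← hc]; push_cast; ring
  refine ⟨1 - P, Matrix.isHermitian_one.sub hP, ?_, ?_, fun j p q => ?_⟩
  · rw [sub_mul, mul_sub, mul_sub, hPP]; simp
  · rw [Matrix.trace_sub, htr, hc']; simp
  · have h1 := marg_one (A := fun j : {j // j ≠ k} => A j) j p q
    have h2 := hm j p q
    have h3 : marg (A := fun j : {j // j ≠ k} => A j) (1 - P : Matrix (Rest A k) (Rest A k) ℂ) j p q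
      = marg (A := fun j : {j // j ≠ k} => A j) (fun x y => (1 : Matrix (Rest A k) (Rest A k) ℂ) x y) j p q
        - marg (A := fun j : {j // j ≠ k} => A j) P j p q := by
      unfold marg
      rw [← Finset.sum_sub_distrib]
      refine Finset.sum_congr rfl fun x _ => ?_
      split_ifs <;> simp
    rw [h3, h1, h2, hc']
    split_ifs
    · rw [sub_div]
    · simp

end split

end Quantum

/-! ## Projections with prescribed diagonal -/

section Carpenter

variable {α : Type} [Fintype α] [DecidableEq α]

def rotM (i j : α) (c s : ℝ) : Matrix α α ℂ :=
  Matrix.of fun x y => if x = i then (if y = i then (c : ℂ) else 0) + (if y = j then (s : ℂ) else 0)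
    else if x = j then (if y = i then (-s : ℂ) else 0) + (if y = j then (c : ℂ) else 0)
    else if y = x then 1 else 0

lemma rotM_unitary {i j : α} (hij : i ≠ j) {c s : ℝ} (h : c ^ 2 + s ^ 2 = 1) :
    rotM i j c s * (rotM i j c s).conjTranspose = 1 := by
  have hc : (c : ℂ) * c + s * s = 1 := by
    have : ((c ^ 2 + s ^ 2 : ℝ) : ℂ) = 1 := by rw [h]; simp
    push_cast at this
    linear_combination this
  ext x y
  rw [Matrix.mul_apply, Matrix.one_apply]
  simp only [Matrix.conjTranspose_apply, rotM, Matrix.of_apply]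
  by_cases hx : x = i
  · subst hx
    simp only [if_true, add_mul, Finset.sum_add_distrib, ite_mul, zero_mul, Finset.sum_ite_eq',
      Finset.mem_univ]
    by_cases hy : y = x
    · subst hy
      simp [hij, hij.symm, hc]
    · by_cases hy' : y = j
      · subst hy'
        simp [hij, hij.symm]; ring
      · simp [hy, hy', Ne.symm hy, Ne.symm hy', eq_comm]
  · by_cases hx' : x = j
    · subst hx'
      simp only [hx, if_false, if_true, add_mul, Finset.sum_add_distrib, ite_mul, zero_mul,
        Finset.sum_ite_eq', Finset.mem_univ]
      by_cases hy : y = i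
      · subst hy
        simp [hij, hij.symm]; ring
      · by_cases hy' : y = x
        · subst hy'
          simp [hij, hij.symm]; linear_combination hc
        · simp [hy, hy', Ne.symm hy, Ne.symm hy', eq_comm]
    · simp only [hx, hx', if_false, ite_mul, zero_mul, Finset.sum_ite_eq', Finset.mem_univ, if_true]
      by_cases hy : y = i
      · subst hy; simp [hx, hx']
      · by_cases hy' : y = j
        · subst hy'; simp [hx, hx', hy]
        · simp [hy, hy']

lemma rotM_diag {i j : α} (hij : i ≠ j) (c s : ℝ) (P : Matrix α α ℂ) (hP : P.IsHermitian) (x : α) :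
    (rotM i j c s * P * (rotM i j c s).conjTranspose) x x =
      if x = i then c ^ 2 * P i i + s ^ 2 * P j j + 2 * c * s * ((P i j).re : ℂ)
      else if x = j then s ^ 2 * P i i + c ^ 2 * P j j - 2 * c * s * ((P i j).re : ℂ)
      else P x x := by
  have h1 : P i j + P j i = 2 * ((P i j).re : ℂ) := by
    rw [← hP.apply j i, ← starRingEnd_apply, Complex.add_conj]; push_cast; ring
  rw [Matrix.mul_apply]
  simp only [Matrix.conjTranspose_apply, Matrix.mul_apply, rotM, Matrix.of_apply]
  by_cases hx : x = i
  · subst hx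
    simp [add_mul, mul_add, Finset.sum_add_distrib, apply_ite (starRingEnd ℂ)]
    linear_combination (c * s : ℂ) * h1
  · by_cases hx' : x = j
    · subst hx'
      simp [hx, add_mul, mul_add, Finset.sum_add_distrib, apply_ite (starRingEnd ℂ)]
      linear_combination (-c * s : ℂ) * h1
    · simp [hx, hx']

lemma carpenter_step {i j : α} (hij : i ≠ j) (P : Matrix α α ℂ) (hP : P.IsHermitian)
    (hPP : P * P = P) (w w' : α → ℝ) (hw' : ∀ x, P x x = (w' x : ℂ))
    (hsum : w i + w j = w' i + w' j) (h1 : w' j ≤ w i) (h2 : w i ≤ w' i)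
    (hne : ∀ x, x ≠ i → x ≠ j → w x = w' x) :
    ∃ Q : Matrix α α ℂ, Q.IsHermitian ∧ Q * Q = Q ∧ ∀ x, Q x x = (w x : ℂ) := by
  let F : ℝ → ℝ := fun t => Real.cos t ^ 2 * w' i + Real.sin t ^ 2 * w' j
    + 2 * Real.cos t * Real.sin t * (P i j).re
  have hF : ContinuousOn F (Set.Icc 0 (Real.pi / 2)) := by
    apply Continuous.continuousOn; fun_prop
  have := intermediate_value_Icc' (by positivity : (0:ℝ) ≤ Real.pi / 2) hF
  have hm : w i ∈ Set.Icc (F (Real.pi / 2)) (F 0) := by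
    simp [F, h1, h2]
  obtain ⟨t, -, ht⟩ := this hm
  have hcs : Real.cos t ^ 2 + Real.sin t ^ 2 = 1 := by
    rw [add_comm]; exact Real.sin_sq_add_cos_sq t
  have hU := rotM_unitary hij hcs
  have hU' := mul_eq_one_comm.1 hU
  set U := rotM i j (Real.cos t) (Real.sin t) with hUd
  refine ⟨U * P * U.conjTranspose, ?_, ?_, ?_⟩
  · exact Matrix.isHermitian_mul_mul_conjTranspose U hP
  · calc U * P * U.conjTranspose * (U * P * U.conjTranspose)
        = U * P * (U.conjTranspose * U) * P * U.conjTranspose := by simp only [Matrix.mul_assoc]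
      _ = U * (P * P) * U.conjTranspose := by rw [hU']; simp only [Matrix.mul_assoc, Matrix.mul_one, Matrix.one_mul]
      _ = _ := by rw [hPP]
  · intro x
    rw [hUd, rotM_diag hij _ _ P hP x]
    split_ifs with hx hx'
    · subst hx
      rw [hw', hw', ← ht]
      simp only [F]; push_cast; ring
    · subst hx'
      have : w x = Real.sin t ^ 2 * w' i + Real.cos t ^ 2 * w' x
          - 2 * Real.cos t * Real.sin t * (P i x).re := by
        simp only [F] at ht
        linear_combination hsum + ht - (w' i + w' x) * hcs
      rw [hw', hw', this]; push_cast; ring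
    · rw [hw', hne x hx hx']

lemma carpenter (w : α → ℝ) (h0 : ∀ i, 0 ≤ w i) (h1 : ∀ i, w i ≤ 1) (r : ℤ)
    (hs : ∑ i, w i = (r : ℝ)) :
    ∃ P : Matrix α α ℂ, P.IsHermitian ∧ P * P = P ∧ ∀ x, P x x = (w x : ℂ) := by
  classical
  generalize hN : (Finset.univ.filter (fun i => w i ≠ 0 ∧ w i ≠ 1)).card = N
  induction N using Nat.strong_induction_on generalizing w with
  | _ N ih =>
  by_cases hfr : ∃ i, w i ≠ 0 ∧ w i ≠ 1
  · obtain ⟨i, hi0, hi1⟩ := hfr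
    have hj : ∃ j, j ≠ i ∧ w j ≠ 0 ∧ w j ≠ 1 := by
      by_contra! hcon
      have : ∃ m : ℤ, ∑ j ∈ Finset.univ.erase i, w j = (m : ℝ) := by
        refine ⟨∑ j ∈ Finset.univ.erase i, if w j = 0 then 0 else 1, ?_⟩
        push_cast
        refine Finset.sum_congr rfl fun j hj => ?_
        split_ifs with h
        · simpa using h
        · simpa using hcon j (Finset.ne_of_mem_erase hj) h
      obtain ⟨m, hm⟩ := this
      rw [← Finset.add_sum_erase _ _ (Finset.mem_univ i), hm] at hs
      have e1 : w i = ((r - m : ℤ) : ℝ) := by push_cast; linarith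
      have e2 : 0 < w i := lt_of_le_of_ne (h0 i) (Ne.symm hi0)
      have e3 : w i < 1 := lt_of_le_of_ne (h1 i) hi1
      rw [e1] at e2 e3
      have e4 : 0 < r - m := by exact_mod_cast e2
      have e5 : r - m < 1 := by exact_mod_cast e3
      omega
    obtain ⟨j, hji, hj0, hj1⟩ := hj
    have hab : ∃ a b : ℝ, w i + w j = a + b ∧ b ≤ w i ∧ w i ≤ a ∧ 0 ≤ b ∧ a ≤ 1 ∧
        ((b = 0) ∨ (a = 1)) := by
      by_cases h : w i + w j ≤ 1
      · exact ⟨w i + w j, 0, by ring, h0 i, by linarith [h0 j], le_refl _, h, Or.inl rfl⟩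
      · exact ⟨1, w i + w j - 1, by ring, by linarith [h1 j], h1 i, by linarith, le_refl _, Or.inr rfl⟩
    obtain ⟨a, b, hsum, hb, ha, hb0, ha1, hor⟩ := hab
    let w' : α → ℝ := Function.update (Function.update w i a) j b
    have wi : w' i = a := by simp [w', Function.update_of_ne hji.symm]
    have wj : w' j = b := by simp [w']
    have wx : ∀ x, x ≠ i → x ≠ j → w x = w' x := by
      intro x hx hx'; simp [w', Function.update_of_ne hx, Function.update_of_ne hx']
    have hlt : (Finset.univ.filter (fun i => w' i ≠ 0 ∧ w' i ≠ 1)).card < N := by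
      rw [← hN]
      apply Finset.card_lt_card
      rw [Finset.ssubset_iff_of_subset]
      · rcases hor with h | h
        · exact ⟨j, by simp [hj0, hj1], by simp [wj, h]⟩
        · exact ⟨i, by simp [hi0, hi1], by simp [wi, h]⟩
      · intro x
        simp only [Finset.mem_filter, Finset.mem_univ, true_and]
        intro hx
        by_cases e1 : x = i
        · subst e1; exact ⟨hi0, hi1⟩
        · by_cases e2 : x = j
          · subst e2; exact ⟨hj0, hj1⟩
          · rwa [wx x e1 e2]
    have hs' : ∑ x, w' x = (r : ℝ) := by
      rw [← hs]
      rw [← Finset.add_sum_erase _ _ (Finset.mem_univ i), ← Finset.add_sum_erase _ w (Finset.mem_univ i),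
        ← Finset.add_sum_erase (Finset.univ.erase i) _ (Finset.mem_erase.2 ⟨hji, Finset.mem_univ j⟩),
        ← Finset.add_sum_erase (Finset.univ.erase i) w (Finset.mem_erase.2 ⟨hji, Finset.mem_univ j⟩),
        wi, wj]
      have : ∑ x ∈ (Finset.univ.erase i).erase j, w' x = ∑ x ∈ (Finset.univ.erase i).erase j, w x := by
        refine Finset.sum_congr rfl fun x hx => ?_
        simp only [Finset.mem_erase] at hx
        exact (wx x hx.2.1 hx.1).symm
      rw [this]; linarith
    obtain ⟨P, hP, hPP, hd⟩ := ih _ hlt w' (by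
      intro x
      by_cases e1 : x = i
      · subst e1; rw [wi]; linarith [h0 x]
      · by_cases e2 : x = j
        · subst e2; rwa [wj]
        · rw [← wx x e1 e2]; exact h0 x) (by
      intro x
      by_cases e1 : x = i
      · subst e1; rwa [wi]
      · by_cases e2 : x = j
        · subst e2; rw [wj]; linarith [h1 i]
        · rw [← wx x e1 e2]; exact h1 x) hs' rfl
    exact carpenter_step hji.symm P hP hPP w w' hd (by rw [wi, wj, hsum]) (by rwa [wj]) (by rwa [wi]) wx
  · push Not at hfr
    refine ⟨Matrix.diagonal fun x => (w x : ℂ), ?_, ?_, ?_⟩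
    · apply Matrix.isHermitian_diagonal_of_self_adjoint
      ext x; simp
    · rw [Matrix.diagonal_mul_diagonal]
      congr 1
      funext x
      by_cases h : w x = 0
      · simp [h]
      · simp [hfr x h]
    · simp

end Carpenter

/-! ## Weights for three factors -/

lemma weights (n b c : ℕ) [NeZero b] (hn : 1 ≤ n) (hbc : b ≤ c) (hc : 2 * c ≤ (n + 1) * b) :
    ∃ w : Fin (n + 1) → ZMod b → ℝ, (∀ i t, 0 ≤ w i t) ∧ (∀ i t, w i t ≤ 1) ∧
      (∀ t, ∃ r : ℤ, ∑ i, w i t = (r : ℝ)) ∧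
      (∀ i, ∑ t, w i t = (c : ℝ) / ((n + 1 : ℕ) : ℝ)) ∧
      (∀ j : ZMod b, ∑ i : Fin (n + 1), w i (j - ((i : ℕ) : ZMod b)) = (c : ℝ) / (b : ℝ)) := by
  have hb : 0 < b := Nat.pos_of_ne_zero (NeZero.ne b)
  have hbR : (0 : ℝ) < b := by exact_mod_cast hb
  have hnR : (1 : ℝ) ≤ n := by exact_mod_cast hn
  have hbcR : (b : ℝ) ≤ c := by exact_mod_cast hbc
  have hcR : 2 * (c : ℝ) ≤ (n + 1) * b := by exact_mod_cast hc
  let E : ZMod b → ℝ := fun t => ((t * (c : ZMod b)).val : ℝ)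
  let M : ℝ := (∑ t, E t) / b
  have hM : ∑ t, E t = b * M := by simp only [M]; field_simp
  have hE0 : ∀ t, 0 ≤ E t := fun t => Nat.cast_nonneg _
  have hEb : ∀ t, E t ≤ b := fun t => by
    simp only [E]; exact_mod_cast (ZMod.val_lt _).le
  have hE2 : ∀ t, E t ≤ 2 * M := by
    intro t
    have h1 : ∀ u, E t ≤ E (t - u) + E u := by
      intro u
      have := ZMod.val_add_le ((t - u) * (c : ZMod b)) (u * c)
      rw [← add_mul, sub_add_cancel] at this
      simp only [E]; exact_mod_cast this
    have h2 := Finset.sum_le_sum fun u (_ : u ∈ Finset.univ) => h1 u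
    rw [Finset.sum_add_distrib, Finset.sum_const, Finset.card_univ, ZMod.card, nsmul_eq_mul,
      Fintype.sum_equiv (Equiv.subLeft t) (fun u => E (t - u)) E (fun u => rfl), hM] at h2
    have h3 : (b : ℝ) * E t ≤ b * (2 * M) := by linarith
    exact le_of_mul_le_mul_left h3 hbR
  have hMb : 2 * M ≤ b := by
    have h1 : ∀ u, E u + E (-u) ≤ b := by
      intro u
      have : (u * (c : ZMod b)).val + (-u * (c : ZMod b)).val ≤ b := by
        rw [neg_mul, ZMod.neg_val]
        split_ifs with h
        · rw [h]; simp
        · have := (ZMod.val_lt (u * (c : ZMod b))).le; omega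
      simp only [E]; exact_mod_cast this
    have h2 := Finset.sum_le_sum fun u (_ : u ∈ Finset.univ) => h1 u
    rw [Finset.sum_add_distrib, Finset.sum_const, Finset.card_univ, ZMod.card, nsmul_eq_mul,
      Fintype.sum_equiv (Equiv.neg (ZMod b)) (fun u => E (-u)) E (fun u => rfl), hM] at h2
    have h3 : (b : ℝ) * (2 * M) ≤ b * b := by linarith
    exact le_of_mul_le_mul_left h3 hbR
  have hstep : ∀ t, (n + 1 : ℝ) * (E (t + 1) - E t) ≤ n * c := by
    intro t
    have h1 : (((t + 1) * (c : ZMod b)).val) ≤ (t * (c : ZMod b)).val + c % b := by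
      have := ZMod.val_add_le (t * (c : ZMod b)) (c : ZMod b)
      rw [ZMod.val_natCast] at this
      rwa [add_mul, one_mul]
    have h2 : b + c % b ≤ c := by
      have h3 := Nat.div_add_mod c b
      have h4 : 1 ≤ c / b := (Nat.one_le_div_iff hb).2 hbc
      nlinarith
    have h3 : c % b < b := Nat.mod_lt _ hb
    have h1' : E (t + 1) ≤ E t + (c % b : ℕ) := by simp only [E]; exact_mod_cast h1
    have h2' : (b : ℝ) + (c % b : ℕ) ≤ c := by exact_mod_cast h2
    have h3' : ((c % b : ℕ) : ℝ) ≤ b := by exact_mod_cast h3.le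
    nlinarith
  have hint : ∀ t, ∃ r : ℤ, (c : ℝ) / b + (E t - E (t + 1)) / b = r := by
    intro t
    have h1 : ((((c : ℤ) + ((t * (c : ZMod b)).val : ℤ) - (((t + 1) * (c : ZMod b)).val : ℤ) : ℤ)) : ZMod b) = 0 := by
      push_cast
      rw [ZMod.natCast_zmod_val, ZMod.natCast_zmod_val]; ring
    rw [ZMod.intCast_zmod_eq_zero_iff_dvd] at h1
    obtain ⟨r, hr⟩ := h1
    refine ⟨r, ?_⟩
    have h2 : (c : ℝ) + E t - E (t + 1) = b * r := by simp only [E]; exact_mod_cast hr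
    field_simp
    linarith
  refine ⟨fun i t => (c : ℝ) / ((n + 1) * b) + ((if i = Fin.last n then 0 else E t - M) -
    (if i = 0 then 0 else E (t + 1) - M)) / (b * n), ?_, ?_, ?_, ?_, ?_⟩
  · intro i t
    beta_reduce
    rw [div_add_div _ _ (by positivity) (by positivity)]
    apply div_nonneg _ (by positivity)
    have h1 := hE0 t
    have h2 := hE0 (t + 1)
    have h3 := hE2 t
    have h4 := hE2 (t + 1)
    have h5 := hstep t
    have key : ∀ x : ℝ, -(n * c) ≤ (n + 1) * x → 0 ≤ c * (b * n) + (n + 1) * b * x := by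
      intro x hx
      have : 0 ≤ b * ((n + 1) * x + n * c) := mul_nonneg hbR.le (by linarith)
      linarith
    apply key
    have hA : ∀ x : ℝ, - (b / 2) ≤ x → -(n * c) ≤ (n + 1) * x := by
      intro x hx
      nlinarith
    split_ifs with h h'
    · apply hA; linarith
    · apply hA; linarith
    · apply hA; linarith
    · linarith
  · intro i t
    have h1 := hE0 t
    have h2 := hE0 (t + 1)
    have h3 := hE2 t
    have h4 := hE2 (t + 1)
    have h5 := hEb t
    have e1 : (c : ℝ) / ((n + 1) * b) ≤ 1 / 2 := by
      rw [div_le_div_iff₀ (by positivity) (by norm_num)]; linarith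
    have key : ∀ x : ℝ, 2 * x ≤ b * n → (c : ℝ) / ((n + 1) * b) + x / (b * n) ≤ 1 := by
      intro x hx
      have : x / (b * n) ≤ 1 / 2 := by
        rw [div_le_div_iff₀ (by positivity) (by norm_num)]; linarith
      linarith
    apply key
    have hbn : (b : ℝ) ≤ b * n := by nlinarith
    split_ifs with h h' h'
    · linarith
    · linarith
    · linarith
    · have : 2 ≤ n := by
        have e1 : (i : ℕ) ≠ n := fun e => h (Fin.ext e)
        have e2 : (i : ℕ) ≠ 0 := fun e => h' (Fin.ext e)
        have := i.2
        omega
      have : (2 : ℝ) ≤ n := by exact_mod_cast this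
      nlinarith
  · intro t
    obtain ⟨r, hr⟩ := hint t
    refine ⟨r, ?_⟩
    rw [← hr, Finset.sum_add_distrib, ← Finset.sum_div, ← Finset.sum_div, Finset.sum_sub_distrib]
    rw [Fin.sum_univ_castSucc (fun i => if i = Fin.last n then 0 else E t - M),
      Fin.sum_univ_succ (fun i => if i = 0 then 0 else E (t + 1) - M)]
    simp [Fin.castSucc_ne_last, Fin.succ_ne_zero]
    field_simp
  · intro i
    rw [Finset.sum_add_distrib, ← Finset.sum_div, ← Finset.sum_div, Finset.sum_sub_distrib]
    have h1 : ∑ t : ZMod b, (if i = Fin.last n then 0 else E t - M) = 0 := by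
      split_ifs
      · simp
      · rw [Finset.sum_sub_distrib, hM]; simp [ZMod.card]
    have h2 : ∑ t : ZMod b, (if i = 0 then 0 else E (t + 1) - M) = 0 := by
      split_ifs
      · simp
      · rw [Finset.sum_sub_distrib,
          Fintype.sum_equiv (Equiv.addRight (1 : ZMod b)) (fun u => E (u + 1)) E (fun u => rfl), hM]
        simp [ZMod.card]
    rw [h1, h2]
    simp [ZMod.card]
    field_simp
  · intro j
    rw [Finset.sum_add_distrib, ← Finset.sum_div, ← Finset.sum_div, Finset.sum_sub_distrib]
    rw [Fin.sum_univ_castSucc (fun i : Fin (n + 1) => if i = Fin.last n then 0 else E (j - ((i : ℕ) : ZMod b)) - M),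
      Fin.sum_univ_succ (fun i : Fin (n + 1) => if i = 0 then 0 else E (j - ((i : ℕ) : ZMod b) + 1) - M)]
    have : ∀ x : ZMod b, j - (x + 1) + 1 = j - x := fun x => by ring
    simp [Fin.castSucc_ne_last, Fin.succ_ne_zero, this]
    field_simp

/-! ## Three factors -/

def rest3 (a b c : ℕ) {Y : Type} (ey : Fin b ≃ Y) :
    Rest (fun i : Fin 3 => Fin (![a, b, c] i)) 2 ≃ Fin a × Y where
  toFun z := (z ⟨0, by decide⟩, ey (z ⟨1, by decide⟩))
  invFun u := fun k => match k with
    | ⟨0, _⟩ => u.1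
    | ⟨1, _⟩ => ey.symm u.2
    | ⟨2, h⟩ => absurd rfl h
  left_inv z := by
    funext k
    match k with
    | ⟨0, _⟩ => rfl
    | ⟨1, _⟩ => exact ey.symm_apply_apply _
    | ⟨2, h⟩ => exact absurd rfl h
  right_inv u := by
    ext
    · rfl
    · exact ey.apply_symm_apply _

lemma proj3 (a b c : ℕ) {Y : Type} [Fintype Y] [DecidableEq Y] (ey : Fin b ≃ Y)
    (P : Matrix (Fin a × Y) (Fin a × Y) ℂ) (hP : P.IsHermitian) (hPP : P * P = P)
    (htr : P.trace = (c : ℂ))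
    (h1 : ∀ p q, ∑ j, P (p, j) (q, j) = if p = q then (c : ℂ) / a else 0)
    (h2 : ∀ p q, ∑ i, P (i, p) (i, q) = if p = q then (c : ℂ) / b else 0) :
    ProjEx (fun i : Fin 3 => Fin (![a, b, c] i)) 2 c := by
  refine ⟨P.submatrix (rest3 a b c ey) (rest3 a b c ey), hP.submatrix _, ?_, ?_, ?_⟩
  · rw [Matrix.submatrix_mul_equiv, hPP]
  · rw [← htr]
    exact Fintype.sum_equiv (rest3 a b c ey) _ _ fun z => rfl
  · intro k
    match k with
    | ⟨0, _⟩ =>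
      intro (p : Fin a) (q : Fin a)
      have h := h1 p q
      change _ = if p = q then (c : ℂ) / (Fintype.card (Fin a) : ℂ) else 0
      rw [Fintype.card_fin]
      refine Eq.trans ?_ h
      unfold marg
      rw [Fintype.sum_equiv (rest3 a b c ey) _ (fun u => if u.1 = p then P u (q, u.2) else 0)]
      · rw [Fintype.sum_prod_type, Finset.sum_eq_single p]
        · simp
        · intro x _ hx; simp [hx]
        · simp
      · intro z
        rfl
    | ⟨1, _⟩ =>
      intro (p : Fin b) (q : Fin b)
      have h := h2 (ey p) (ey q)
      simp only [EmbeddingLike.apply_eq_iff_eq] at h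
      change _ = if p = q then (c : ℂ) / (Fintype.card (Fin b) : ℂ) else 0
      rw [Fintype.card_fin]
      refine Eq.trans ?_ h
      unfold marg
      rw [Fintype.sum_equiv (rest3 a b c ey) _ (fun u => if u.2 = ey p then P u (u.1, ey q) else 0)]
      · rw [Fintype.sum_prod_type]
        refine Finset.sum_congr rfl fun i _ => ?_
        rw [Finset.sum_eq_single (ey p)]
        · simp
        · intro x _ hx; simp [hx]
        · simp
      · intro z
        have : (rest3 a b c ey z).2 = ey p ↔ z ⟨1, by decide⟩ = p := ey.apply_eq_iff_eq
        by_cases hz : z ⟨1, by decide⟩ = p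
        · rw [if_pos (this.2 hz)]; exact if_pos hz
        · rw [if_neg (fun h' => hz (this.1 h'))]; exact if_neg hz
    | ⟨2, h⟩ => exact absurd rfl h

lemma proj_grid (a b c : ℕ) [NeZero b] (ha : 2 ≤ a) (hab : a ≤ b) (hbc : b ≤ c)
    (hc : 2 * c ≤ a * b) : ProjEx (fun i : Fin 3 => Fin (![a, b, c] i)) 2 c := by
  obtain ⟨n, rfl⟩ : ∃ n, a = n + 1 := ⟨a - 1, by omega⟩
  obtain ⟨w, hw0, hw1, hwt, hwr, hwc⟩ := weights n b c (by omega) hbc hc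
  have hQ : ∀ t, ∃ Q : Matrix (Fin (n + 1)) (Fin (n + 1)) ℂ, Q.IsHermitian ∧ Q * Q = Q ∧
      ∀ x, Q x x = (w x t : ℂ) := by
    intro t
    obtain ⟨r, hr⟩ := hwt t
    exact carpenter (fun i => w i t) (fun i => hw0 i t) (fun i => hw1 i t) r hr
  choose Q hQ1 hQ2 hQ3 using hQ
  have hinj : ∀ i i' : Fin (n + 1), ((i : ℕ) : ZMod b) = ((i' : ℕ) : ZMod b) → i = i' := by
    intro i i' h
    rw [ZMod.natCast_eq_natCast_iff', Nat.mod_eq_of_lt (by omega), Nat.mod_eq_of_lt (by omega)] at h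
    exact Fin.ext h
  let f : Fin (n + 1) × ZMod b → ZMod b := fun u => u.2 - ((u.1 : ℕ) : ZMod b)
  let P : Matrix (Fin (n + 1) × ZMod b) (Fin (n + 1) × ZMod b) ℂ :=
    Matrix.of fun u v => if f u = f v then Q (f u) u.1 v.1 else 0
  have hrow : ∀ p q, ∑ j, P (p, j) (q, j) = if p = q then (c : ℂ) / ((n + 1 : ℕ) : ℂ) else 0 := by
    intro p q
    by_cases h : p = q
    · subst h
      simp only [P, f, Matrix.of_apply, if_true, hQ3]
      rw [Fintype.sum_equiv (Equiv.subRight ((p : ℕ) : ZMod b)) (fun t => (w p (t - ((p : ℕ) : ZMod b)) : ℂ))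
        (fun t => (w p t : ℂ)) (fun t => rfl)]
      have := hwr p
      have h2 : ((∑ t, w p t : ℝ) : ℂ) = ((c / ((n + 1 : ℕ) : ℝ) : ℝ) : ℂ) := by rw [this]
      push_cast at h2 ⊢
      exact h2
    · rw [if_neg h]
      refine Finset.sum_eq_zero fun j _ => ?_
      simp only [P, f, Matrix.of_apply]
      rw [if_neg]
      intro h'
      exact h (hinj _ _ (sub_right_injective h'))
  refine proj3 (n + 1) b c (ZMod.finEquiv b).toEquiv P ?_ ?_ ?_ hrow ?_
  · ext u v
    simp only [P, Matrix.conjTranspose_apply, Matrix.of_apply]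
    by_cases h : f u = f v
    · rw [if_pos h, if_pos h.symm, h]
      exact (hQ1 _).apply _ _
    · rw [if_neg h, if_neg (Ne.symm h), star_zero]
  · ext u v
    rw [Matrix.mul_apply]
    simp only [P, Matrix.of_apply]
    by_cases h : f u = f v
    · rw [if_pos h]
      conv_rhs => rw [← hQ2 (f u), Matrix.mul_apply]
      rw [Fintype.sum_prod_type]
      refine Finset.sum_congr rfl fun i _ => ?_
      rw [Finset.sum_eq_single (f u + ((i : ℕ) : ZMod b))]
      · have : f (i, f u + ((i : ℕ) : ZMod b)) = f u := by simp [f]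
        rw [this, if_pos rfl, if_pos h]
      · intro j _ hj
        rw [if_neg, zero_mul]
        intro h'
        apply hj
        rw [h']; simp [f]
      · simp
    · rw [if_neg h]
      refine Finset.sum_eq_zero fun x _ => ?_
      by_cases h1 : f u = f x
      · rw [if_neg (fun h2 => h (h1.trans h2)), mul_zero]
      · rw [if_neg h1, zero_mul]
  · rw [Matrix.trace, Fintype.sum_prod_type]
    simp only [Matrix.diag_apply]
    have : (((n + 1 : ℕ) : ℂ)) ≠ 0 := Nat.cast_ne_zero.2 (by omega)
    simp only [hrow, if_true, Finset.sum_const, Finset.card_univ, Fintype.card_fin, nsmul_eq_mul]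
    field_simp
  · intro p q
    by_cases h : p = q
    · subst h
      simp only [P, f, Matrix.of_apply, if_true, hQ3]
      have := hwc p
      rw [← Complex.ofReal_sum, this]
      push_cast; rfl
    · rw [if_neg h]
      refine Finset.sum_eq_zero fun j _ => ?_
      simp only [P, f, Matrix.of_apply]
      rw [if_neg]
      intro h'
      exact h (sub_left_injective h')

/-! ## Numerical wrappers -/

def LMEN {n : ℕ} (d : Fin n → ℕ) : Prop := LMEx (fun i => Fin (d i))

lemma LMEN_three {a b c : ℕ} (ha : 2 ≤ a) (hab : a ≤ b) (hbc : b ≤ c) (hc : 2 * c ≤ a * b) :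
    LMEN ![a, b, c] := by
  have : NeZero b := ⟨by omega⟩
  have : ∀ i, Nonempty (Fin (![a, b, c] i)) := by
    intro i
    refine ⟨⟨0, ?_⟩⟩
    fin_cases i <;> simp <;> omega
  apply lme_of_proj (2 : Fin 3)
  have := proj_grid a b c ha hab hbc hc
  have e : Fintype.card (Fin (![a, b, c] 2)) = c := Fintype.card_fin c
  rwa [e]

lemma LMEN_merge {n m : ℕ} (d : Fin n → ℕ) (d' : Fin m → ℕ) (hd : ∀ i, 1 ≤ d i)
    (p : Fin n → Fin m) (h : ∀ k, d' k = ∏ i with p i = k, d i) (hL : LMEN d') : LMEN d := by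
  have : ∀ i, Nonempty (Fin (d i)) := fun i => ⟨⟨0, hd i⟩⟩
  apply LMEx_merge p
  refine LMEx_transport (fun k => Fintype.equivOfCardEq ?_) hL
  rw [Fintype.card_pi, Fintype.card_fin, h k]
  simp only [Fintype.card_fin]
  rw [← Finset.prod_subtype_eq_prod_filter, Finset.subtype_univ]

lemma card_Rest {n : ℕ} (d : Fin n → ℕ) (k : Fin n) :
    Fintype.card (Rest (fun i => Fin (d i)) k) = othr d k := by
  rw [Fintype.card_pi, othr]
  simp only [Fintype.card_fin]
  rw [← Finset.prod_subtype (Finset.univ.erase k) (p := fun j => j ≠ k) (by simp) d]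

lemma LMEN_le {n : ℕ} (d : Fin n → ℕ) (hd : ∀ i, 1 ≤ d i) (k : Fin n) (h : LMEN d) :
    d k ≤ othr d k := by
  have : ∀ i, Nonempty (Fin (d i)) := fun i => ⟨⟨0, hd i⟩⟩
  have := proj_le k _ (proj_of_lme k h)
  rwa [Fintype.card_fin, card_Rest] at this

lemma LMEN_full {n : ℕ} (d : Fin n → ℕ) (hd : ∀ i, 1 ≤ d i) (k : Fin n) (h : d k = othr d k) :
    LMEN d := by
  have : ∀ i, Nonempty (Fin (d i)) := fun i => ⟨⟨0, hd i⟩⟩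
  apply lme_of_proj k
  rw [Fintype.card_fin, h, ← card_Rest]
  exact proj_full k

lemma ProjEx_congr {n : ℕ} (d d' : Fin n → ℕ) (k : Fin n) (c : ℕ) (h : ∀ j, j ≠ k → d j = d' j)
    (hP : ProjEx (fun i => Fin (d i)) k c) : ProjEx (fun i => Fin (d' i)) k c := by
  have h1 : (fun j : {j // j ≠ k} => d j) = (fun j : {j // j ≠ k} => d' j) := by
    funext j; exact h j j.2
  unfold ProjEx Rest at *
  have key : ∀ e e' : {j // j ≠ k} → ℕ, e = e' →
      (∃ P : Matrix (∀ j, Fin (e j)) (∀ j, Fin (e j)) ℂ, P.IsHermitian ∧ P * P = P ∧ P.trace = (c : ℂ) ∧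
        ∀ j p q, marg (A := fun j => Fin (e j)) P j p q =
          if p = q then (c : ℂ) / Fintype.card (Fin (e j)) else 0) →
      (∃ P : Matrix (∀ j, Fin (e' j)) (∀ j, Fin (e' j)) ℂ, P.IsHermitian ∧ P * P = P ∧ P.trace = (c : ℂ) ∧
        ∀ j p q, marg (A := fun j => Fin (e' j)) P j p q =
          if p = q then (c : ℂ) / Fintype.card (Fin (e' j)) else 0) := by
    intro e e' h
    subst h
    exact id
  exact key _ _ h1 hP

lemma LMEN_castle {n : ℕ} (d : Fin n → ℕ) (hd : ∀ i, 1 ≤ d i) (k : Fin n) (h : d k < othr d k)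
    (hL : LMEN d) : LMEN (Function.update d k (othr d k - d k)) := by
  have : ∀ i, Nonempty (Fin (d i)) := fun i => ⟨⟨0, hd i⟩⟩
  have h1 := proj_of_lme k hL
  rw [Fintype.card_fin] at h1
  have h2 := proj_compl k (d k) (othr d k - d k) (by rw [card_Rest]; omega) h1
  have h3 := ProjEx_congr d (Function.update d k (othr d k - d k)) k _
    (fun j hj => by rw [Function.update_of_ne hj]) h2
  have : ∀ i, Nonempty (Fin (Function.update d k (othr d k - d k) i)) := by
    intro i
    refine ⟨⟨0, ?_⟩⟩
    by_cases hi : i = k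
    · subst hi; simp; omega
    · rw [Function.update_of_ne hi]; exact hd i
  apply lme_of_proj k
  rwa [Fintype.card_fin, Function.update_self]

lemma LMEN_iff {n : ℕ} (hn : 1 ≤ n) (d : Fin n → ℕ) (hd : ∀ i, 1 ≤ d i) : LMEExists n d ↔ LMEN d := by
  have e : ∀ ψ : (∀ i, Fin (d i)) → ℂ, (∀ k, rhoK d ψ k = (1 / (d k : ℂ)) • 1) ↔
      ∀ k p q, marg (A := fun i => Fin (d i)) (fun x y => ψ x * conj (ψ y)) k p q =
        if p = q then 1 / (Fintype.card (Fin (d k)) : ℂ) else 0 := by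
    intro ψ
    refine forall_congr' fun k => ?_
    rw [← Matrix.ext_iff]
    refine forall_congr' fun p => forall_congr' fun q => ?_
    simp only [rhoK, marg, Matrix.of_apply, Matrix.smul_apply, Matrix.one_apply, smul_eq_mul,
      mul_ite, mul_one, mul_zero, Fintype.card_fin]
  constructor
  · rintro ⟨ψ, -, h⟩
    exact ⟨ψ, (e ψ).1 h⟩
  · rintro ⟨ψ, h⟩
    have h' := (e ψ).2 h
    refine ⟨ψ, ?_, h'⟩
    let k : Fin n := ⟨0, hn⟩
    have h1 : (rhoK d ψ k).trace = 1 := by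
      rw [h' k]
      have : (d k : ℂ) ≠ 0 := Nat.cast_ne_zero.2 (by have := hd k; omega)
      simp [Matrix.trace_smul, Matrix.trace_one, this]
    have h2 : (rhoK d ψ k).trace = ∑ x, ψ x * conj (ψ x) := by
      simp only [Matrix.trace, Matrix.diag_apply, rhoK, Matrix.of_apply]
      rw [Finset.sum_comm]
      refine Finset.sum_congr rfl fun x _ => ?_
      rw [Finset.sum_ite_eq]
      simp
    rw [h1] at h2
    simp only [Complex.mul_conj, Complex.normSq_eq_norm_sq] at h2
    unfold Normalized
    have h3 : ((∑ x, ‖ψ x‖ ^ 2 : ℝ) : ℂ) = 1 := by rw [h2]; push_cast; rfl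
    exact_mod_cast h3

/-! ## Combining everything -/

def QQ {n : ℕ} (d : Fin n → ℕ) : Prop := LMEN d ∧ 0 ≤ Rfun d

lemma QQ_merge {n m : ℕ} (d : Fin n → ℕ) (d' : Fin m → ℕ) (hd : ∀ i, 1 ≤ d i)
    (p : Fin n → Fin m) (h : ∀ k, d' k = ∏ i with p i = k, d i) (hQ : QQ d') : QQ d := by
  refine ⟨LMEN_merge d d' hd p h hQ.1, Rfun_merge d d' ?_ p h hQ.2⟩
  intro k
  rw [h k]
  exact Finset.one_le_prod' fun i _ => hd i

lemma QQ_perm {n : ℕ} (d : Fin n → ℕ) (hd : ∀ i, 1 ≤ d i) (σ : Equiv.Perm (Fin n))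
    (hQ : QQ (d ∘ σ)) : QQ d := by
  refine QQ_merge d (d ∘ σ) hd σ.symm ?_ hQ
  intro k
  have : (Finset.univ.filter fun i => σ.symm i = k) = {σ k} := by
    ext i; simp [Equiv.symm_apply_eq]
  rw [this]; simp

lemma QQ_full {n : ℕ} (d : Fin n → ℕ) (hd : ∀ i, 1 ≤ d i) (k : Fin n) (h : d k = othr d k) :
    QQ d := ⟨LMEN_full d hd k h, Rfun_full d hd k h⟩

lemma LMEN_castle_iff {n : ℕ} (d : Fin n → ℕ) (hd : ∀ i, 1 ≤ d i) (k : Fin n) (h : d k < othr d k) :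
    LMEN d ↔ LMEN (Function.update d k (othr d k - d k)) := by
  refine ⟨LMEN_castle d hd k h, fun hL => ?_⟩
  have h0 := hd k
  have := LMEN_castle (Function.update d k (othr d k - d k)) (by
    intro i
    by_cases hi : i = k
    · subst hi; simp; omega
    · rw [Function.update_of_ne hi]; exact hd i) k (by
    rw [othr_update, Function.update_self]; omega) hL
  rw [othr_update, Function.update_self, Function.update_idem] at this
  have e : othr d k - (othr d k - d k) = d k := by omega
  rwa [e, Function.update_eq_self] at this

lemma QQ_castle {n : ℕ} (d : Fin n → ℕ) (hd : ∀ i, 1 ≤ d i) (k : Fin n) (h : d k < othr d k)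
    (hQ : QQ (Function.update d k (othr d k - d k))) : QQ d :=
  ⟨(LMEN_castle_iff d hd k h).2 hQ.1, by rw [← Rfun_castle d k h.le]; exact hQ.2⟩

lemma pos3 {a b c : ℕ} (ha : 1 ≤ a) (hb : 1 ≤ b) (hc : 1 ≤ c) : ∀ i, 1 ≤ ![a, b, c] i := by
  intro i
  fin_cases i <;> simp <;> assumption

lemma othr3 (a b c : ℕ) : othr ![a, b, c] 2 = a * b := by
  have : (Finset.univ : Finset (Fin 3)).erase 2 = {0, 1} := by decide
  rw [othr, this]; simp

lemma QQ3_swap {a b c : ℕ} (ha : 1 ≤ a) (hb : 1 ≤ b) (hc : 1 ≤ c) (h : QQ ![a, c, b]) :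
    QQ ![a, b, c] := by
  apply QQ_perm _ (pos3 ha hb hc) (Equiv.swap 1 2)
  convert h using 1
  funext i
  fin_cases i <;> simp [Equiv.swap_apply_def]

lemma QQ3_full {a b c : ℕ} (ha : 1 ≤ a) (hb : 1 ≤ b) (h : c = a * b) : QQ ![a, b, c] := by
  have hc : 1 ≤ c := by rw [h]; exact Nat.mul_pos ha hb
  apply QQ_full _ (pos3 ha hb hc) 2
  rw [othr3]; simpa using h

lemma QQ3_castle {a b c : ℕ} (ha : 1 ≤ a) (hb : 1 ≤ b) (hc : 1 ≤ c) (h : c < a * b)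
    (hQ : QQ ![a, b, a * b - c]) : QQ ![a, b, c] := by
  apply QQ_castle _ (pos3 ha hb hc) 2
  · rw [othr3]; simpa using h
  · rw [othr3]
    convert hQ using 1
    funext i
    fin_cases i <;> simp

lemma QQ3_base {a b c : ℕ} (hb : 1 ≤ b) (hab : a ≤ b) (hbc : b ≤ c)
    (hc : 2 * c ≤ a * b) : QQ ![a, b, c] := by
  have ha : 2 ≤ a := by
    by_contra h
    have : a ≤ 1 := by omega
    nlinarith
  exact ⟨LMEN_three ha hab hbc hc, Rfun_three ha hab hbc hc⟩

lemma QQ3_core {a b c x y : ℕ} (ha : 1 ≤ a) (hab : a ≤ b) (hbc : b ≤ c) (hcxy : c = x * y)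
    (hx : 2 ≤ x) (hy : 1 ≤ y) (h1 : y = 1 → 2 * c ≤ a * b)
    (hm1 : a + x * y ≤ a * x + y) (hm2 : a + x * y ≤ a * y + x) : QQ ![a, b, c] := by
  have hb : 1 ≤ b := ha.trans hab
  have hc1 : 1 ≤ c := hb.trans hbc
  by_cases hbase : 2 * c ≤ a * b
  · exact QQ3_base hb hab hbc hbase
  push Not at hbase
  have hy2 : 2 ≤ y := by
    by_contra h
    have := h1 (by omega)
    omega
  have hya : y ≤ a := by
    by_contra h
    push Not at h
    obtain ⟨u, rfl⟩ := Nat.exists_eq_add_of_lt h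
    nlinarith
  have hxa : x ≤ a := by
    by_contra h
    push Not at h
    obtain ⟨u, rfl⟩ := Nat.exists_eq_add_of_lt h
    nlinarith
  have hcaa : c ≤ a * a := by rw [hcxy]; exact Nat.mul_le_mul hxa hya
  have haab : a * a ≤ a * b := Nat.mul_le_mul_left a hab
  rcases (hcaa.trans haab).eq_or_lt with hfull | hlt
  · exact QQ3_full ha hb hfull
  apply QQ3_castle ha hb hc1 hlt
  set c' := a * b - c with hc'
  have hcc : c' + c = a * b := by omega
  have hc'1 : 1 ≤ c' := by omega
  by_cases hcb : b ≤ c'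
  · apply QQ3_base hb hab hcb
    omega
  push Not at hcb
  have hne : a ≠ b := by
    rintro rfl
    -- here `c < a * a` with both factors at most `a` forces a gap of size `a`
    have : c + a ≤ a * a := by
      rw [hcxy] at hlt ⊢
      rcases hxa.eq_or_lt with h | h
      · have : y < a := by
          rcases hya.eq_or_lt with h' | h'
          · rw [h, h'] at hlt; omega
          · exact h'
        nlinarith
      · nlinarith
    omega
  obtain ⟨u, hu⟩ := Nat.exists_eq_add_of_lt (lt_of_le_of_ne hab hne)
  have hac' : a * (u + 1) ≤ c' := by
    have : a * b = a * a + a * (u + 1) := by rw [hu]; ring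
    omega
  apply QQ3_swap ha hb hc'1
  have ha2 : 2 ≤ a := by omega
  by_cases hbase2 : 2 * b ≤ a * c'
  · exact QQ3_base hc'1 (by nlinarith) hcb.le hbase2
  push Not at hbase2
  have hu0 : u = 0 := by
    by_contra h
    have : 1 ≤ u := by omega
    have e1 : a * (a * (u + 1)) ≤ a * c' := Nat.mul_le_mul_left a hac'
    have e2 : 2 * (a * (u + 1)) ≤ a * (a * (u + 1)) := Nat.mul_le_mul_right _ ha2
    nlinarith
  subst hu0
  have ha' : a = 2 := by
    by_contra h
    have : 3 ≤ a := by omega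
    have e1 : a * (a * (0 + 1)) ≤ a * c' := Nat.mul_le_mul_left a hac'
    nlinarith
  subst ha'
  have hb3 : b = 3 := by omega
  have hc2 : c' = 2 := by omega
  rw [hb3, hc2]
  apply QQ3_castle (by norm_num) (by norm_num) (by norm_num) (by norm_num)
  apply QQ3_swap (by norm_num) (by norm_num) (by norm_num)
  exact QQ3_full (by norm_num) (by norm_num) (by norm_num)

def GG {n : ℕ} (d : Fin n → ℕ) (p : Fin n → Fin 3) (k : Fin 3) : ℕ := ∏ i with p i = k, d i

lemma GG_move {n : ℕ} (d : Fin n → ℕ) (p : Fin n → Fin 3) (S : Finset (Fin n))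
    (hS : ∀ i ∈ S, p i = 2) :
    GG d (fun i => if i ∈ S then 0 else p i) 0 = GG d p 0 * ∏ i ∈ S, d i ∧
    GG d (fun i => if i ∈ S then 0 else p i) 1 = GG d p 1 ∧
    GG d (fun i => if i ∈ S then 0 else p i) 2 =
      ∏ i ∈ (Finset.univ.filter fun i => p i = 2) \ S, d i := by
  refine ⟨?_, ?_, ?_⟩
  · unfold GG
    rw [← Finset.prod_union]
    · refine Finset.prod_congr ?_ fun _ _ => rfl
      ext i
      by_cases hi : i ∈ S <;> simp [hi]
    · rw [Finset.disjoint_left]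
      intro i hi hi'
      have := hS i hi'
      simp [this] at hi
  · unfold GG
    refine Finset.prod_congr ?_ fun _ _ => rfl
    ext i
    by_cases hi : i ∈ S
    · simp [hi, hS i hi]
    · simp [hi]
  · unfold GG
    refine Finset.prod_congr ?_ fun _ _ => rfl
    ext i
    by_cases hi : i ∈ S <;> simp [hi]

lemma exists_opt {n : ℕ} (d : Fin n → ℕ) : ∃ p : Fin n → Fin 3,
    (∀ p', ∑ k, GG d p k ≤ ∑ k, GG d p' k) ∧ GG d p 0 ≤ GG d p 1 ∧ GG d p 1 ≤ GG d p 2 := by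
  obtain ⟨p, hp⟩ := Finite.exists_min (fun p : Fin n → Fin 3 => ∑ k, GG d p k)
  have hmono := Tuple.monotone_sort (GG d p)
  set σ := Tuple.sort (GG d p)
  have hG : ∀ k, GG d (σ.symm ∘ p) k = GG d p (σ k) := by
    intro k
    simp only [GG, Function.comp_apply, Equiv.symm_apply_eq]
  refine ⟨σ.symm ∘ p, ?_, ?_, ?_⟩
  · intro p'
    simp only [hG]
    rw [Equiv.sum_comp σ (GG d p)]
    exact hp p'
  · rw [hG, hG]; exact hmono (by decide)
  · rw [hG, hG]; exact hmono (by decide)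

lemma QQ_reduced {n : ℕ} (hn : 1 ≤ n) (d : Fin n → ℕ) (hd : ∀ i, 1 ≤ d i)
    (hr : ∀ k, 2 * d k ≤ othr d k) : QQ d := by
  obtain ⟨p, hmin, h01, h12⟩ := exists_opt d
  have hGpos : ∀ k, 1 ≤ GG d p k := fun k => Finset.one_le_prod' fun i _ => hd i
  have htot : ∏ i, d i = GG d p 0 * GG d p 1 * GG d p 2 := by
    rw [← Finset.prod_fiberwise Finset.univ p d, Fin.prod_univ_three]; rfl
  apply QQ_merge d ![GG d p 0, GG d p 1, GG d p 2] hd p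
  · intro k
    fin_cases k <;> rfl
  have hk : ∃ k, p k = 2 ∧ 2 ≤ d k := by
    by_contra! hcon
    have h2 : GG d p 2 = 1 := by
      apply Finset.prod_eq_one
      intro i hi
      have := hcon i (by simpa using hi)
      have := hd i
      omega
    have h1 : GG d p 1 = 1 := by have := hGpos 1; omega
    have h0 : GG d p 0 = 1 := by have := hGpos 0; omega
    rw [h0, h1, h2] at htot
    have h3 := hr ⟨0, hn⟩
    have h4 := mul_othr d ⟨0, hn⟩
    rw [htot] at h4
    have h5 := hd ⟨0, hn⟩
    nlinarith
  obtain ⟨k, hpk, hdk⟩ := hk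
  have hmem : k ∈ Finset.univ.filter fun i => p i = 2 := by simp [hpk]
  have hc : GG d p 2 = d k * ∏ i ∈ (Finset.univ.filter fun i => p i = 2).erase k, d i :=
    (Finset.mul_prod_erase _ _ hmem).symm
  set y := ∏ i ∈ (Finset.univ.filter fun i => p i = 2).erase k, d i with hy
  obtain ⟨m10, m11, m12⟩ := GG_move d p {k} (by simpa using hpk)
  obtain ⟨m20, m21, m22⟩ := GG_move d p ((Finset.univ.filter fun i => p i = 2).erase k) (by
    intro i hi; simp at hi; exact hi.2)
  rw [Finset.sdiff_singleton_eq_erase, ← hy] at m12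
  rw [← hy] at m20
  rw [Finset.sdiff_erase_self hmem, Finset.prod_singleton] at m22
  rw [Finset.prod_singleton] at m10
  have q1 := hmin (fun i => if i ∈ ({k} : Finset (Fin n)) then 0 else p i)
  have q2 := hmin (fun i => if i ∈ (Finset.univ.filter fun i => p i = 2).erase k then 0 else p i)
  rw [Fin.sum_univ_three, Fin.sum_univ_three, m10, m11, m12] at q1
  rw [Fin.sum_univ_three, Fin.sum_univ_three, m20, m21, m22] at q2
  refine QQ3_core (x := d k) (y := y) (hGpos 0) h01 h12 hc hdk
    (Finset.one_le_prod' fun i _ => hd i) ?_ ?_ ?_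
  · intro hy1
    rw [hy1, mul_one] at hc
    have h3 := hr k
    have h4 := mul_othr d k
    rw [htot, hc, mul_comm] at h4
    have h5 := Nat.eq_of_mul_eq_mul_right (by omega) h4
    rw [hc, ← h5]; exact h3
  · rw [hc] at q1; omega
  · rw [hc] at q2; omega

lemma main_aux {n : ℕ} (hn : 1 ≤ n) (N : ℕ) : ∀ d : Fin n → ℕ, (∀ i, 1 ≤ d i) → ∑ i, d i = N →
    (LMEN d ↔ 0 ≤ Rfun d) := by
  induction N using Nat.strong_induction_on with
  | _ N ih =>
  intro d hd hN
  by_cases hr : ∀ k, 2 * d k ≤ othr d k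
  · have := QQ_reduced hn d hd hr
    exact ⟨fun _ => this.2, fun _ => this.1⟩
  push Not at hr
  obtain ⟨k, hk⟩ := hr
  rcases lt_trichotomy (d k) (othr d k) with h | h | h
  · rw [LMEN_castle_iff d hd k h, ← Rfun_castle d k h.le]
    refine ih (∑ i, Function.update d k (othr d k - d k) i) ?_ _ ?_ rfl
    · rw [← hN]
      apply Finset.sum_lt_sum
      · intro i _
        by_cases hi : i = k
        · subst hi; simp; omega
        · rw [Function.update_of_ne hi]
      · exact ⟨k, Finset.mem_univ k, by simp; omega⟩
    · intro i
      by_cases hi : i = k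
      · subst hi; simp; omega
      · rw [Function.update_of_ne hi]; exact hd i
  · have := QQ_full d hd k h
    exact ⟨fun _ => this.2, fun _ => this.1⟩
  · have h1 := Rfun_neg d hd k h
    exact ⟨fun hL => absurd (LMEN_le d hd k hL) (by omega), fun h2 => absurd h2 (by omega)⟩

/-- LME states exist for dimensions `d` iff `R(d) ≥ 0`. -/
theorem lme_exists_iff_R_nonneg (n : ℕ) (hn : 1 ≤ n) (d : Fin n → ℕ)
    (hd : ∀ i, 1 ≤ d i) :
    LMEExists n d ↔ 0 ≤ Rfun d := by
  rw [LMEN_iff hn d hd]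
  exact main_aux hn _ d hd rfl
end
end

section
/- Let B ≥ 2 and let ψ be a normalized locally maximally entangled state for dimensions (2, B, B). Then there exist unitary matrices U₁ ∈ U(2), U₂, U₃ ∈ U(B) and functions θ, φ : Fin B → ℝ with ∑_i cos (θ i) = 0, ∑_i sin (θ i) cos (φ i) = 0, ∑_i sin (θ i) sin (φ i) = 0, such that ψ(a,b,c) = ∑_{a',b',c'} U₁ a a' · U₂ b b' · U₃ c c' · ψ₀(a',b',c'), where ψ₀ is the state with ψ₀(0, i, i) = (1/√B) cos (θ i / 2), ψ₀(1, i, i) = (1/√B) exp(I · φ i) sin (θ i / 2), and ψ₀ = 0 whenever the second and third indices differ. -/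
open scoped ComplexConjugate

noncomputable section

def rho1 {A B C : ℕ} (ψ : Fin A × Fin B × Fin C → ℂ) : Matrix (Fin A) (Fin A) ℂ :=
  Matrix.of fun a a' => ∑ b, ∑ c, ψ (a, b, c) * conj (ψ (a', b, c))

def rho2 {A B C : ℕ} (ψ : Fin A × Fin B × Fin C → ℂ) : Matrix (Fin B) (Fin B) ℂ :=
  Matrix.of fun b b' => ∑ a, ∑ c, ψ (a, b, c) * conj (ψ (a, b', c))

def rho3 {A B C : ℕ} (ψ : Fin A × Fin B × Fin C → ℂ) : Matrix (Fin C) (Fin C) ℂ :=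
  Matrix.of fun c c' => ∑ a, ∑ b, ψ (a, b, c) * conj (ψ (a, b, c'))

def TriNormalized {A B C : ℕ} (ψ : Fin A × Fin B × Fin C → ℂ) : Prop :=
  ∑ x, ‖ψ x‖ ^ 2 = 1

def TriIsLME {A B C : ℕ} (ψ : Fin A × Fin B × Fin C → ℂ) : Prop :=
  TriNormalized ψ ∧ rho1 ψ = (1 / (A : ℂ)) • 1 ∧
    rho2 ψ = (1 / (B : ℂ)) • 1 ∧ rho3 ψ = (1 / (C : ℂ)) • 1

def TriLMEExists (A B C : ℕ) : Prop := ∃ ψ : Fin A × Fin B × Fin C → ℂ, TriIsLME ψ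

/-- The diagonal (2,B,B) state determined by angles θ, φ. -/
def psi0 (B : ℕ) (θ φ : Fin B → ℝ) : Fin 2 × Fin B × Fin B → ℂ :=
  fun x =>
    if x.2.1 = x.2.2 then
      (if x.1 = 0 then (((1 / Real.sqrt B) * Real.cos (θ x.2.1 / 2) : ℝ) : ℂ)
       else ((1 / Real.sqrt B : ℝ) : ℂ) * Complex.exp (Complex.I * (φ x.2.1 : ℝ)) *
         ((Real.sin (θ x.2.1 / 2) : ℝ) : ℂ))
    else 0

open scoped Matrix

def colMat {n : ℕ} (b : Fin n → EuclideanSpace ℂ (Fin n)) : Matrix (Fin n) (Fin n) ℂ :=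
  Matrix.of fun i j => b j i

theorem colMat_unitary {n : ℕ} (b : OrthonormalBasis (Fin n) ℂ (EuclideanSpace ℂ (Fin n))) :
    (colMat b) * (colMat b)ᴴ = 1 ∧ (colMat b)ᴴ * (colMat b) = 1 := by
  have h : (colMat b)ᴴ * (colMat b) = 1 := by
    ext i j
    have := (orthonormal_iff_ite.mp b.orthonormal) i j
    rw [PiLp.inner_apply] at this
    rw [Matrix.mul_apply, Matrix.one_apply, ← this]
    refine Finset.sum_congr rfl fun k _ => ?_
    simp [colMat, mul_comm]
  exact ⟨mul_eq_one_comm.mp h, h⟩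

theorem colMat_mul {n : ℕ} (A : Matrix (Fin n) (Fin n) ℂ) (b u : Fin n → EuclideanSpace ℂ (Fin n))
    (d : Fin n → ℂ) (h : ∀ i, Matrix.toEuclideanLin A (b i) = d i • u i) :
    A * colMat b = colMat u * Matrix.diagonal d := by
  ext i j
  have := congrArg (fun x : EuclideanSpace ℂ (Fin n) => x i) (h j)
  simp only [Matrix.toLpLin_apply, Matrix.mulVec, dotProduct, PiLp.smul_apply, smul_eq_mul] at this
  rw [Matrix.mul_apply, Matrix.mul_diagonal]
  simp only [colMat, Matrix.of_apply]
  rw [this, mul_comm]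

theorem simdiag {n : ℕ} (T : Fin 3 → Matrix (Fin n) (Fin n) ℂ) (hT : ∀ k, (T k).IsHermitian)
    (hC : ∀ i j, T i * T j = T j * T i) :
    ∃ (W : Matrix (Fin n) (Fin n) ℂ) (d : Fin 3 → Fin n → ℂ), (W * Wᴴ = 1 ∧ Wᴴ * W = 1) ∧
      ∀ k, T k * W = W * Matrix.diagonal (d k) := by
  classical
  let L : Fin 3 → (EuclideanSpace ℂ (Fin n) →ₗ[ℂ] EuclideanSpace ℂ (Fin n)) :=
    fun k => Matrix.toEuclideanLin (T k)
  have hL : ∀ k, (L k).IsSymmetric := fun k => Matrix.isSymmetric_toEuclideanLin_iff.mpr (hT k)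
  have hLC : Pairwise (Function.onFun Commute L) := by
    intro i j _
    change L i * L j = L j * L i
    ext1 x
    simp only [L, Module.End.mul_apply, Matrix.toLpLin_apply, Matrix.mulVec_mulVec, hC i j]
  have hI := LinearMap.IsSymmetric.directSum_isInternal_of_pairwise_commute hL hLC
  have hO := LinearMap.IsSymmetric.orthogonalFamily_iInf_eigenspaces hL
  have hI' := (DirectSum.isInternal_ne_bot_iff).mpr hI
  have hO' := hO.comp (Subtype.val_injective (p := fun α : Fin 3 → ℂ => (⨅ j, Module.End.eigenspace (L j) (α j)) ≠ ⊥))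
  have := iSupIndep.fintypeNeBotOfFiniteDimensional hI.submodule_iSupIndep
  have hn : Module.finrank ℂ (EuclideanSpace ℂ (Fin n)) = n := by simp
  let b := hI'.subordinateOrthonormalBasis hn hO'
  refine ⟨colMat b, fun k i => (hI'.subordinateOrthonormalBasisIndex hn i hO').1 k,
    colMat_unitary b, fun k => colMat_mul _ _ _ _ fun i => ?_⟩
  have := hI'.subordinateOrthonormalBasis_subordinate hn i hO'
  exact Module.End.mem_eigenspace_iff.mp ((Submodule.mem_iInf _).mp this k)

open scoped ComplexOrder in
theorem svd {n : ℕ} (A : Matrix (Fin n) (Fin n) ℂ) :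
    ∃ (V W : Matrix (Fin n) (Fin n) ℂ) (s : Fin n → ℝ), (V * Vᴴ = 1 ∧ Vᴴ * V = 1) ∧
      (W * Wᴴ = 1 ∧ Wᴴ * W = 1) ∧ (∀ i, 0 ≤ s i) ∧
      A * W = V * Matrix.diagonal (fun i => (s i : ℂ)) := by
  classical
  have hp : (Aᴴ * A).PosSemidef := Matrix.posSemidef_conjTranspose_mul_self A
  have hH := hp.isHermitian
  let b := hH.eigenvectorBasis
  let l := hH.eigenvalues
  let L := Matrix.toEuclideanLin A
  have hl : ∀ i, 0 ≤ l i := hp.eigenvalues_nonneg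
  have hin : ∀ i j, inner ℂ (L (b i)) (L (b j)) = if i = j then (l j : ℂ) else 0 := by
    intro i j
    have h1 : LinearMap.adjoint L (L (b j)) = (l j : ℂ) • b j := by
      have : LinearMap.adjoint L = Matrix.toEuclideanLin Aᴴ :=
        (Matrix.toEuclideanLin_conjTranspose_eq_adjoint A).symm
      rw [this]
      simp only [L, Matrix.toLpLin_apply, Matrix.mulVec_mulVec]
      have := hH.mulVec_eigenvectorBasis j
      apply WithLp.ofLp_injective
      simpa [b, l] using! this
    rw [← LinearMap.adjoint_inner_right, h1, inner_smul_right, orthonormal_iff_ite.mp b.orthonormal]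
    simp
  let v : Fin n → EuclideanSpace ℂ (Fin n) := fun i => ((Real.sqrt (l i) : ℂ))⁻¹ • L (b i)
  let s : Set (Fin n) := {i | l i ≠ 0}
  have hs : ∀ i, ((Real.sqrt (l i) : ℂ)) * (Real.sqrt (l i) : ℂ) = l i := by
    intro i
    rw [← Complex.ofReal_mul, Real.mul_self_sqrt (hl i)]
  have hv : Orthonormal ℂ (s.domRestrict v) := by
    rw [orthonormal_iff_ite]
    rintro ⟨i, hi⟩ ⟨j, hj⟩
    simp only [Set.domRestrict_apply, v, inner_smul_left, inner_smul_right, hin, Subtype.mk.injEq]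
    split_ifs with h
    · subst h
      have h0 : (l i : ℂ) ≠ 0 := by exact_mod_cast hi
      have h2 : (Real.sqrt (l i) : ℂ) ≠ 0 := by
        intro h; apply h0; rw [← hs, h]; simp
      rw [map_inv₀, Complex.conj_ofReal, ← hs i]
      field_simp
    · simp
  obtain ⟨u, hu⟩ := hv.exists_orthonormalBasis_extension_of_card_eq (by simp)
  refine ⟨colMat u, colMat b, fun i => Real.sqrt (l i), colMat_unitary u, colMat_unitary b,
    fun i => Real.sqrt_nonneg _, colMat_mul _ _ _ _ fun i => ?_⟩
  by_cases h : l i = 0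
  · have := hin i i
    simp only [if_true, h, Complex.ofReal_zero, inner_self_eq_zero] at this
    simpa [h] using this
  · have h0 : (l i : ℂ) ≠ 0 := by exact_mod_cast h
    have h2 : (Real.sqrt (l i) : ℂ) ≠ 0 := by
      intro h; apply h0; rw [← hs, h]; simp
    rw [hu i h, smul_smul, mul_inv_cancel₀ h2, one_smul]

theorem core {n : ℕ} (X Y : Matrix (Fin n) (Fin n) ℂ) (h1 : X * Xᴴ + Y * Yᴴ = 1)
    (h2 : Xᴴ * X + Yᴴ * Y = 1) :
    ∃ (U V : Matrix (Fin n) (Fin n) ℂ) (s : Fin n → ℝ) (z : Fin n → ℂ),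
      (U * Uᴴ = 1 ∧ Uᴴ * U = 1) ∧ (V * Vᴴ = 1 ∧ Vᴴ * V = 1) ∧
      (∀ i, s i ^ 2 + ‖z i‖ ^ 2 = 1) ∧
      X = U * Matrix.diagonal (fun i => (s i : ℂ)) * Vᴴ ∧ Y = U * Matrix.diagonal z * Vᴴ := by
  obtain ⟨V, W, s, ⟨hV1, hV2⟩, ⟨hW1, hW2⟩, hs, hX⟩ := svd X
  set S : Matrix (Fin n) (Fin n) ℂ := Matrix.diagonal (fun i => (s i : ℂ)) with hS
  have hSH : Sᴴ = S := by
    rw [hS, Matrix.diagonal_conjTranspose]; congr 1; ext i; simp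
  have cV (M : Matrix (Fin n) (Fin n) ℂ) : V * (Vᴴ * M) = M := by rw [← mul_assoc, hV1, one_mul]
  have cV' (M : Matrix (Fin n) (Fin n) ℂ) : Vᴴ * (V * M) = M := by rw [← mul_assoc, hV2, one_mul]
  have cW (M : Matrix (Fin n) (Fin n) ℂ) : W * (Wᴴ * M) = M := by rw [← mul_assoc, hW1, one_mul]
  have cW' (M : Matrix (Fin n) (Fin n) ℂ) : Wᴴ * (W * M) = M := by rw [← mul_assoc, hW2, one_mul]
  have hX' : X = V * S * Wᴴ := by rw [← hX, mul_assoc, hW1, mul_one]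
  obtain ⟨Q, hQ⟩ : ∃ Q, Q = Vᴴ * Y * W := ⟨_, rfl⟩
  have hY : Y = V * Q * Wᴴ := by
    rw [hQ]; simp only [mul_assoc, cV, hW1, mul_one]
  have e1 : S * S + Q * Qᴴ = 1 := by
    have := congrArg (fun M => Vᴴ * M * V) h1
    simpa only [hX', hY, Matrix.conjTranspose_mul, Matrix.conjTranspose_conjTranspose, hSH,
      mul_add, add_mul, mul_assoc, cV', cW', hV2, mul_one] using this
  have e2 : S * S + Qᴴ * Q = 1 := by
    have := congrArg (fun M => Wᴴ * M * W) h2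
    simpa only [hX', hY, Matrix.conjTranspose_mul, Matrix.conjTranspose_conjTranspose, hSH,
      mul_add, add_mul, mul_assoc, cV', cW', hW2, mul_one] using this
  have hN : Q * Qᴴ = Qᴴ * Q := add_left_cancel (e1.trans e2.symm)
  have hc2 : Q * (S * S) = (S * S) * Q := by
    have a1 : S * S = 1 - Q * Qᴴ := eq_sub_of_add_eq e1
    have a2 : S * S = 1 - Qᴴ * Q := eq_sub_of_add_eq e2
    conv_lhs => rw [a2]
    rw [a1]; noncomm_ring
  have hc : Q * S = S * Q := by
    ext i j
    have := congrFun (congrFun hc2 i) j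
    rw [hS, Matrix.diagonal_mul_diagonal, Matrix.mul_diagonal, Matrix.diagonal_mul] at this
    rw [hS, Matrix.mul_diagonal, Matrix.diagonal_mul]
    by_cases hq : Q i j = 0
    · simp [hq]
    · have h3 : (s j : ℂ) * s j = s i * s i := by
        apply mul_left_cancel₀ hq; rw [this]; ring
      have h4 : s j * s j = s i * s i := by exact_mod_cast h3
      have h5 : s j = s i := (mul_self_inj (hs j) (hs i)).mp h4
      rw [h5, mul_comm]
  have hc' : Qᴴ * S = S * Qᴴ := by
    have := congrArg Matrix.conjTranspose hc
    rw [Matrix.conjTranspose_mul, Matrix.conjTranspose_mul, hSH] at this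
    exact this.symm
  obtain ⟨R, d, ⟨hR1, hR2⟩, hd⟩ := simdiag ![S, Q + Qᴴ, Complex.I • (Q - Qᴴ)]
    (by
      intro k
      fin_cases k
      · exact hSH
      · change (Q + Qᴴ)ᴴ = Q + Qᴴ
        rw [Matrix.conjTranspose_add, Matrix.conjTranspose_conjTranspose, add_comm]
      · change (Complex.I • (Q - Qᴴ))ᴴ = Complex.I • (Q - Qᴴ)
        rw [Matrix.conjTranspose_smul, Matrix.conjTranspose_sub, Matrix.conjTranspose_conjTranspose]
        simp [smul_sub]
        abel)
    (by
      have t1 : S * (Q + Qᴴ) = (Q + Qᴴ) * S := by rw [mul_add, add_mul, hc, hc']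
      have t2 : S * (Complex.I • (Q - Qᴴ)) = (Complex.I • (Q - Qᴴ)) * S := by
        rw [mul_smul_comm, smul_mul_assoc, mul_sub, sub_mul, hc, hc']
      have t3 : (Q + Qᴴ) * (Complex.I • (Q - Qᴴ)) = (Complex.I • (Q - Qᴴ)) * (Q + Qᴴ) := by
        rw [mul_smul_comm, smul_mul_assoc]
        congr 1
        simp only [mul_add, add_mul, mul_sub, sub_mul, hN]
        abel
      intro i j
      fin_cases i <;> fin_cases j <;> first | rfl | exact t1 | exact t1.symm | exact t2 | exact t2.symm | exact t3 | exact t3.symm)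
  have d0 : S * R = R * Matrix.diagonal (d 0) := hd 0
  have d1 : (Q + Qᴴ) * R = R * Matrix.diagonal (d 1) := hd 1
  have d2 : (Complex.I • (Q - Qᴴ)) * R = R * Matrix.diagonal (d 2) := hd 2
  obtain ⟨z, hz⟩ : ∃ z : Fin n → ℂ, z = fun i => (d 1 i - Complex.I * d 2 i) / 2 := ⟨_, rfl⟩
  have dz : Q * R = R * Matrix.diagonal z := by
    have hq : Q = (1 / 2 : ℂ) • (Q + Qᴴ) - (Complex.I / 2) • (Complex.I • (Q - Qᴴ)) := by
      ext i j
      simp only [Matrix.sub_apply, Matrix.smul_apply, Matrix.add_apply, smul_eq_mul]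
      linear_combination (Q i j - Qᴴ i j) / 2 * Complex.I_mul_I
    rw [hq, sub_mul, smul_mul_assoc, smul_mul_assoc, d1, d2]
    ext i j
    simp only [Matrix.sub_apply, Matrix.smul_apply, Matrix.mul_diagonal, smul_eq_mul, hz]
    ring
  have cR (M : Matrix (Fin n) (Fin n) ℂ) : R * (Rᴴ * M) = M := by rw [← mul_assoc, hR1, one_mul]
  have cR' (M : Matrix (Fin n) (Fin n) ℂ) : Rᴴ * (R * M) = M := by rw [← mul_assoc, hR2, one_mul]
  have S' : S = R * Matrix.diagonal (d 0) * Rᴴ := by rw [← d0, mul_assoc, hR1, mul_one]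
  have Q' : Q = R * Matrix.diagonal z * Rᴴ := by rw [← dz, mul_assoc, hR1, mul_one]
  have hreal : ∀ i, conj (d 0 i) = d 0 i := by
    have : (Matrix.diagonal (d 0))ᴴ = Matrix.diagonal (d 0) := by
      have e : Matrix.diagonal (d 0) = Rᴴ * S * R := by rw [mul_assoc, d0, cR']
      rw [e]; simp only [Matrix.conjTranspose_mul, Matrix.conjTranspose_conjTranspose, hSH, mul_assoc]
    intro i
    have := congrFun (congrFun this i) i
    simpa using this
  have hre : ∀ i, (((d 0 i).re : ℝ) : ℂ) = d 0 i := fun i => Complex.conj_eq_iff_re.mp (hreal i)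
  refine ⟨V * R, W * R, fun i => (d 0 i).re, z, ⟨?_, ?_⟩, ⟨?_, ?_⟩, ?_, ?_, ?_⟩
  · simp only [Matrix.conjTranspose_mul, mul_assoc, cR, hV1]
  · simp only [Matrix.conjTranspose_mul, mul_assoc, cV', hR2]
  · simp only [Matrix.conjTranspose_mul, mul_assoc, cR, hW1]
  · simp only [Matrix.conjTranspose_mul, mul_assoc, cW', hR2]
  · intro i
    have := congrArg (fun M => Rᴴ * M * R) e1
    simp only [S', Q', Matrix.conjTranspose_mul, Matrix.conjTranspose_conjTranspose,
      mul_add, add_mul, mul_assoc, cR', hR2, mul_one] at this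
    have := congrFun (congrFun this i) i
    rw [Matrix.diagonal_conjTranspose, Matrix.add_apply, Matrix.diagonal_mul_diagonal,
      Matrix.diagonal_mul_diagonal, Matrix.diagonal_apply_eq, Matrix.diagonal_apply_eq,
      Matrix.one_apply_eq] at this
    have e : z i * star z i = ((‖z i‖ ^ 2 : ℝ) : ℂ) := by
      rw [Pi.star_apply, ← starRingEnd_apply, Complex.mul_conj, Complex.normSq_eq_norm_sq]
    rw [e, ← hre i] at this
    rw [pow_two]
    exact_mod_cast this
  · simp only [hre]
    rw [hX', S']; simp only [Matrix.conjTranspose_mul, mul_assoc]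
  · rw [hY, Q']; simp only [Matrix.conjTranspose_mul, mul_assoc]

theorem entry {n : ℕ} (U V : Matrix (Fin n) (Fin n) ℂ) (d : Fin n → ℂ) (b c : Fin n) :
    (U * Matrix.diagonal d * Vᴴ) b c = ∑ i, U b i * d i * conj (V c i) := by
  rw [Matrix.mul_apply]
  simp [Matrix.mul_diagonal]

theorem tr_diag {n : ℕ} (U V : Matrix (Fin n) (Fin n) ℂ) (hU : Uᴴ * U = 1) (hV : Vᴴ * V = 1)
    (d e : Fin n → ℂ) :
    ∑ b, ∑ c, (U * Matrix.diagonal d * Vᴴ) b c * conj ((U * Matrix.diagonal e * Vᴴ) b c)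
      = ∑ i, d i * conj (e i) := by
  have h : ∑ b, ∑ c, (U * Matrix.diagonal d * Vᴴ) b c * conj ((U * Matrix.diagonal e * Vᴴ) b c)
      = Matrix.trace ((U * Matrix.diagonal d * Vᴴ) * (U * Matrix.diagonal e * Vᴴ)ᴴ) := by
    simp only [Matrix.trace, Matrix.diag_apply]
    refine Finset.sum_congr rfl fun b _ => ?_
    rw [Matrix.mul_apply]
    rfl
  rw [h]
  have h2 : (U * Matrix.diagonal d * Vᴴ) * (U * Matrix.diagonal e * Vᴴ)ᴴ
      = U * (Matrix.diagonal d * (Matrix.diagonal e)ᴴ * Uᴴ) := by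
    simp only [Matrix.conjTranspose_mul, Matrix.conjTranspose_conjTranspose, mul_assoc]
    rw [← mul_assoc Vᴴ V, hV, one_mul]
  rw [h2, Matrix.trace_mul_comm, mul_assoc, hU, mul_one, Matrix.diagonal_conjTranspose,
    Matrix.diagonal_mul_diagonal, Matrix.trace_diagonal]
  rfl

/-- every LME state for dimensions (2, B, B) is obtained from a
diagonal state `psi0` by local unitary transformations. -/
theorem lme_2BB_classification (B : ℕ) (hB : 2 ≤ B)
    (ψ : Fin 2 × Fin B × Fin B → ℂ) (hψ : TriIsLME ψ) :
    ∃ (U₁ : Matrix (Fin 2) (Fin 2) ℂ) (U₂ U₃ : Matrix (Fin B) (Fin B) ℂ)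
      (θ φ : Fin B → ℝ),
      (U₁ * U₁ᴴ = 1 ∧ U₁ᴴ * U₁ = 1) ∧
      (U₂ * U₂ᴴ = 1 ∧ U₂ᴴ * U₂ = 1) ∧
      (U₃ * U₃ᴴ = 1 ∧ U₃ᴴ * U₃ = 1) ∧
      (∑ i, Real.cos (θ i) = 0) ∧
      (∑ i, Real.sin (θ i) * Real.cos (φ i) = 0) ∧
      (∑ i, Real.sin (θ i) * Real.sin (φ i) = 0) ∧
      ∀ a b c, ψ (a, b, c) =
        ∑ a', ∑ b', ∑ c', U₁ a a' * U₂ b b' * U₃ c c' * psi0 B θ φ (a', b', c') := by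
  obtain ⟨-, hr1, hr2, hr3⟩ := hψ
  have hB0 : (0 : ℝ) < B := by exact_mod_cast (by omega : 0 < B)
  obtain ⟨r, hr⟩ : ∃ r : ℝ, r = Real.sqrt B := ⟨_, rfl⟩
  have hrp : 0 < r := by rw [hr]; exact Real.sqrt_pos.mpr hB0
  have hrr : r * r = B := by rw [hr]; exact Real.mul_self_sqrt hB0.le
  have hrc : (r : ℂ) * r = B := by exact_mod_cast hrr
  have hr0 : (r : ℂ) ≠ 0 := by exact_mod_cast hrp.ne'
  have hBc : (B : ℂ) ≠ 0 := by exact_mod_cast hB0.ne'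
  let N : Fin 2 → Matrix (Fin B) (Fin B) ℂ := fun a => Matrix.of fun b c => (r : ℂ) * ψ (a, b, c)
  have h1 : N 0 * (N 0)ᴴ + N 1 * (N 1)ᴴ = 1 := by
    ext b b'
    have := congrFun (congrFun hr2 b) b'
    simp only [rho2, Matrix.of_apply, Fin.sum_univ_two, Matrix.smul_apply, smul_eq_mul] at this
    have h' : (1 : Matrix (Fin B) (Fin B) ℂ) b b' = r * r * (1 / (B : ℂ) * (1 : Matrix (Fin B) (Fin B) ℂ) b b') := by
      rw [hrc]; field_simp
    rw [h', ← this, Matrix.add_apply, Matrix.mul_apply, Matrix.mul_apply, mul_add, Finset.mul_sum,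
      Finset.mul_sum]
    congr 1 <;>
    · refine Finset.sum_congr rfl fun c _ => ?_
      simp [N]; ring
  have h2 : (N 0)ᴴ * N 0 + (N 1)ᴴ * N 1 = 1 := by
    ext c' c
    have := congrFun (congrFun hr3 c) c'
    simp only [rho3, Matrix.of_apply, Fin.sum_univ_two, Matrix.smul_apply, smul_eq_mul] at this
    have h' : (1 : Matrix (Fin B) (Fin B) ℂ) c' c = r * r * (1 / (B : ℂ) * (1 : Matrix (Fin B) (Fin B) ℂ) c c') := by
      rw [hrc, Matrix.one_apply, Matrix.one_apply]; simp only [eq_comm]; field_simp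
    rw [h', ← this, Matrix.add_apply, Matrix.mul_apply, Matrix.mul_apply, mul_add, Finset.mul_sum,
      Finset.mul_sum]
    congr 1 <;>
    · refine Finset.sum_congr rfl fun c _ => ?_
      simp [N]; ring
  have h3 : ∀ a a', ∑ b, ∑ c, N a b c * conj (N a' b c) = B * (1 / 2 * (1 : Matrix (Fin 2) (Fin 2) ℂ) a a') := by
    intro a a'
    have := congrFun (congrFun hr1 a) a'
    simp only [rho1, Matrix.of_apply, Matrix.smul_apply, smul_eq_mul, Nat.cast_ofNat] at this
    rw [← this, ← hrc, Finset.mul_sum]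
    refine Finset.sum_congr rfl fun b _ => ?_
    rw [Finset.mul_sum]
    refine Finset.sum_congr rfl fun c _ => ?_
    simp [N]; ring
  obtain ⟨U, V, s, z, hU, hV, hsz, hX, hY⟩ := core (N 0) (N 1) h1 h2
  have t1 : ∑ i, s i ^ 2 = B / 2 := by
    have := h3 0 0
    rw [hX, tr_diag U V hU.2 hV.2] at this
    simp only [Complex.conj_ofReal, Matrix.one_apply_eq] at this
    have h' : (((∑ i, s i ^ 2 : ℝ)) : ℂ) = ((B / 2 : ℝ) : ℂ) := by
      push_cast
      simp only [pow_two]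
      rw [this]; ring
    exact_mod_cast h'
  have t2 : ∑ i, z i * s i = 0 := by
    have := h3 1 0
    rw [hX, hY, tr_diag U V hU.2 hV.2] at this
    simpa using this
  have hθc : ∀ i, Real.cos (2 * Real.arccos (s i) / 2) = s i := by
    intro i
    rw [mul_div_cancel_left₀ _ two_ne_zero]
    exact Real.cos_arccos (by nlinarith [hsz i, sq_nonneg ‖z i‖]) (by nlinarith [hsz i, sq_nonneg ‖z i‖])
  have hθs : ∀ i, Real.sin (2 * Real.arccos (s i) / 2) = ‖z i‖ := by
    intro i
    rw [mul_div_cancel_left₀ _ two_ne_zero, Real.sin_arccos, ← hsz i, add_sub_cancel_left,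
      Real.sqrt_sq (norm_nonneg _)]
  have hsin : ∀ i, Real.sin (2 * Real.arccos (s i)) = 2 * ‖z i‖ * s i := by
    intro i
    have e : 2 * Real.arccos (s i) = 2 * (2 * Real.arccos (s i) / 2) := by ring
    rw [e, Real.sin_two_mul, hθs, hθc]
  have hre : ∀ i, (z i * s i).re = ‖z i‖ * Real.cos (z i).arg * s i := by
    intro i; rw [Complex.norm_mul_cos_arg]; simp
  have him : ∀ i, (z i * s i).im = ‖z i‖ * Real.sin (z i).arg * s i := by
    intro i; rw [Complex.norm_mul_sin_arg]; simp
  refine ⟨1, U, V.map conj, fun i => 2 * Real.arccos (s i), fun i => (z i).arg,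
    by simp, hU, ?_, ?_, ?_, ?_, ?_⟩
  · have e : (V.map conj)ᴴ = (Vᴴ).map conj := by ext; simp
    rw [e, ← Matrix.map_mul, ← Matrix.map_mul, hV.1, hV.2]
    simp
  · have e : ∀ i, Real.cos (2 * Real.arccos (s i)) = 2 * s i ^ 2 - 1 := by
      intro i
      have e : 2 * Real.arccos (s i) = 2 * (2 * Real.arccos (s i) / 2) := by ring
      rw [e, Real.cos_two_mul, hθc]
    simp only [e, Finset.sum_sub_distrib, ← Finset.mul_sum, t1]
    simp
    ring
  · have := congrArg Complex.re t2
    rw [Complex.re_sum] at this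
    simp only [hre, Complex.zero_re] at this
    rw [← mul_zero (2 : ℝ), ← this, Finset.mul_sum]
    refine Finset.sum_congr rfl fun i _ => ?_
    rw [hsin]; ring
  · have := congrArg Complex.im t2
    rw [Complex.im_sum] at this
    simp only [him, Complex.zero_im] at this
    rw [← mul_zero (2 : ℝ), ← this, Finset.mul_sum]
    refine Finset.sum_congr rfl fun i _ => ?_
    rw [hsin]; ring
  · intro a b c
    have key : ∀ a, ∀ d : Fin B → ℂ, N a = U * Matrix.diagonal d * Vᴴ →
        ψ (a, b, c) = ∑ i, U b i * conj (V c i) * ((1 / (r : ℂ)) * d i) := by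
      intro a d h
      have := congrFun (congrFun h b) c
      rw [entry] at this
      have e : ψ (a, b, c) = 1 / (r : ℂ) * N a b c := by simp [N, hr0]
      rw [e, this, Finset.mul_sum]
      refine Finset.sum_congr rfl fun i _ => ?_
      ring
    have hz : ∀ i, Complex.exp (Complex.I * ((z i).arg : ℝ)) * (‖z i‖ : ℂ) = z i := by
      intro i
      rw [mul_comm, mul_comm Complex.I]; exact Complex.norm_mul_exp_arg_mul_I _
    have hp0 : ∀ i j, psi0 B (fun i => 2 * Real.arccos (s i)) (fun i => (z i).arg) (0, i, j) =
        if i = j then (1 / (r : ℂ)) * s i else 0 := by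
      intro i j
      simp only [psi0, hθc, ← hr, if_true]
      push_cast; rfl
    have hp1 : ∀ i j, psi0 B (fun i => 2 * Real.arccos (s i)) (fun i => (z i).arg) (1, i, j) =
        if i = j then (1 / (r : ℂ)) * z i else 0 := by
      intro i j
      simp only [psi0, hθs, ← hr, one_ne_zero, if_false, mul_assoc, hz]
      push_cast; rfl
    obtain rfl | rfl : a = 0 ∨ a = 1 := by fin_cases a <;> simp
    · rw [Fin.sum_univ_two]
      simp only [hp0, Fin.zero_eta, Matrix.one_apply_eq, Matrix.map_apply, mul_ite, mul_zero,
        Finset.sum_ite_eq, Finset.mem_univ, if_true, one_mul]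
      rw [key 0 _ hX]
      simp
    · rw [Fin.sum_univ_two]
      simp only [hp1, Fin.mk_one, Matrix.one_apply_eq, Matrix.map_apply, mul_ite, mul_zero,
        Finset.sum_ite_eq, Finset.mem_univ, if_true, one_mul]
      rw [key 1 _ hY]
      simp
end
end

section
/- Let A, d₂, d₃ be integers with 2 ≤ A ≤ d₂ ≤ d₃. Suppose LME states exist for the tripartite dimensions (A, d₂, d₃) and Δ(A, d₂, d₃) < 0. Define S_A to be the set of pairs (b, c) of positive integers such that 2·b ≤ A·c, 2·c ≤ A·b, b·c ≥ A, A·b·c − A² − b² − c² + 4 ≤ 0, and LME states exist for dimensions (b, c, A). Then there exist a sequence f : ℕ → ℕ and an index i such that f(j+1) + f(j−1) = A·f(j) for all j ≥ 1, (d₂, d₃) = (f(i), f(i+1)), and either (f(0), f(1)) = (k, k·A) for some positive integer k, or (f(0), f(1)) ∈ S_A. -/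
open scoped ComplexConjugate

noncomputable section

/-- The finite exceptional set S_A of Proposition 5.4. -/
def SApair (A b c : ℕ) : Prop :=
  1 ≤ b ∧ 1 ≤ c ∧ 2 * b ≤ A * c ∧ 2 * c ≤ A * b ∧ A ≤ b * c ∧
    (A : ℤ) * b * c - (A : ℤ) ^ 2 - (b : ℤ) ^ 2 - (c : ℤ) ^ 2 + 4 ≤ 0 ∧
    TriLMEExists b c A

lemma sf_norm {A B C : ℕ} (hC : 1 ≤ C) (ψ : Fin A × Fin B × Fin C → ℂ)
    (h : rho3 ψ = (1 / (C : ℂ)) • 1) : TriNormalized ψ := by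
  have h1 : ∀ c, ∑ a, ∑ b, ψ (a, b, c) * conj (ψ (a, b, c)) = 1 / (C : ℂ) := by
    intro c
    have := congrFun (congrFun h c) c
    simpa [rho3] using this
  have hC' : (C : ℂ) ≠ 0 := by
    have : C ≠ 0 := by omega
    exact_mod_cast this
  have h2 : ∑ c, ∑ a, ∑ b, ψ (a, b, c) * conj (ψ (a, b, c)) = 1 := by
    rw [Finset.sum_congr rfl (fun c _ => h1 c)]
    simp [hC']
  unfold TriNormalized
  have h3 : ((∑ x, ‖ψ x‖ ^ 2 : ℝ) : ℂ) = 1 := by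
    rw [← h2]
    push_cast
    rw [Fintype.sum_prod_type]
    simp_rw [Fintype.sum_prod_type]
    rw [Finset.sum_comm]
    rw [Finset.sum_comm]
    conv_rhs => rw [Finset.sum_comm]
    refine Finset.sum_congr rfl fun a _ => ?_
    conv_rhs => rw [Finset.sum_comm]
    refine Finset.sum_congr rfl fun b _ => ?_
    refine Finset.sum_congr rfl fun c _ => ?_
    rw [Complex.mul_conj, Complex.normSq_eq_norm_sq]
    push_cast
    rfl
  exact_mod_cast h3

lemma sf_cyc {A B C : ℕ} (hA : 1 ≤ A) (h : TriLMEExists A B C) : TriLMEExists B C A := by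
  obtain ⟨ψ, -, h1, h2, h3⟩ := h
  have e3 : rho3 (fun x : Fin B × Fin C × Fin A => ψ (x.2.2, x.1, x.2.1)) =
      (1 / (A : ℂ)) • 1 := by
    rw [← h1]; rfl
  refine ⟨fun x => ψ (x.2.2, x.1, x.2.1), sf_norm hA _ e3, ?_, ?_, e3⟩
  · rw [← h2]; ext i j; simp only [rho1, rho2, Matrix.of_apply]
    exact Finset.sum_comm
  · rw [← h3]; ext i j; simp only [rho2, rho3, Matrix.of_apply]
    exact Finset.sum_comm

lemma sf_swap {A B C : ℕ} (hB : 1 ≤ B) (h : TriLMEExists A B C) : TriLMEExists A C B := by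
  obtain ⟨ψ, -, h1, h2, h3⟩ := h
  have e3 : rho3 (fun x : Fin A × Fin C × Fin B => ψ (x.1, x.2.2, x.2.1)) =
      (1 / (B : ℂ)) • 1 := by
    rw [← h2]; rfl
  refine ⟨fun x => ψ (x.1, x.2.2, x.2.1), sf_norm hB _ e3, ?_, ?_, e3⟩
  · rw [← h1]; ext i j; simp only [rho1, Matrix.of_apply]
    exact Finset.sum_comm
  · rw [← h3]; rfl

/-- Rows form an orthonormal family. -/
lemma sf_orth {A B C : ℕ} (hC : 1 ≤ C) (ψ : Fin A × Fin B × Fin C → ℂ)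
    (h : rho3 ψ = (1 / (C : ℂ)) • 1) :
    Orthonormal ℂ (fun c : Fin C => (WithLp.toLp 2
      (fun p : Fin A × Fin B => ((Real.sqrt C : ℝ) : ℂ) * ψ (p.1, p.2, c)) :
        EuclideanSpace ℂ (Fin A × Fin B))) := by
  have hC' : (C : ℂ) ≠ 0 := by
    have : C ≠ 0 := by omega
    exact_mod_cast this
  have hs : ((Real.sqrt C : ℝ) : ℂ) * ((Real.sqrt C : ℝ) : ℂ) = C := by
    rw [← Complex.ofReal_mul, Real.mul_self_sqrt (Nat.cast_nonneg C)]; simp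
  rw [orthonormal_iff_ite]
  intro c c'
  have hh := congrFun (congrFun h c') c
  simp only [rho3, Matrix.of_apply, Matrix.smul_apply, Matrix.one_apply, smul_eq_mul] at hh
  rw [PiLp.inner_apply]
  simp only [RCLike.inner_apply, map_mul, Complex.conj_ofReal]
  have : ∀ p : Fin A × Fin B, ((Real.sqrt C : ℝ) : ℂ) * ψ (p.1, p.2, c') *
      (((Real.sqrt C : ℝ) : ℂ) * conj (ψ (p.1, p.2, c))) =
      C * (ψ (p.1, p.2, c') * conj (ψ (p.1, p.2, c))) := by
    intro p; rw [← hs]; ring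
  rw [Finset.sum_congr rfl (fun p _ => this p), ← Finset.mul_sum, Fintype.sum_prod_type, hh]
  by_cases e : c = c'
  · subst e; simp [hC']
  · simp [e, Ne.symm e]

lemma sf_le {A B C : ℕ} (hC : 1 ≤ C) (h : TriLMEExists A B C) : C ≤ A * B := by
  obtain ⟨ψ, -, -, -, h3⟩ := h
  have := (sf_orth hC ψ h3).linearIndependent.fintype_card_le_finrank
  simpa using this

lemma sf_castle {A B C D : ℕ} (hA : 1 ≤ A) (hB : 1 ≤ B) (hC : 1 ≤ C) (hD : 1 ≤ D)
    (hCD : C + D = A * B)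
    (h : TriLMEExists A B C) : TriLMEExists A B D := by
  obtain ⟨ψ, -, h1, h2, h3⟩ := h
  have ho := sf_orth hC ψ h3
  set v : Fin C → EuclideanSpace ℂ (Fin A × Fin B) := fun c => (WithLp.toLp 2
      (fun p : Fin A × Fin B => ((Real.sqrt C : ℝ) : ℂ) * ψ (p.1, p.2, c))) with hv
  have hCc : (C : ℂ) ≠ 0 := by
    have : C ≠ 0 := by omega
    exact_mod_cast this
  have hDc : (D : ℂ) ≠ 0 := by
    have : D ≠ 0 := by omega
    exact_mod_cast this
  have hAc : (A : ℂ) ≠ 0 := by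
    have : A ≠ 0 := by omega
    exact_mod_cast this
  have hBc : (B : ℂ) ≠ 0 := by
    have : B ≠ 0 := by omega
    exact_mod_cast this
  have hCDc : (C : ℂ) + D = A * B := by exact_mod_cast hCD
  have hs : ((Real.sqrt C : ℝ) : ℂ) * ((Real.sqrt C : ℝ) : ℂ) = C := by
    rw [← Complex.ofReal_mul, Real.mul_self_sqrt (Nat.cast_nonneg C)]; simp
  have ht : ((Real.sqrt D : ℝ) : ℂ)⁻¹ * ((Real.sqrt D : ℝ) : ℂ)⁻¹ = 1 / D := by
    rw [← mul_inv, ← Complex.ofReal_mul, Real.mul_self_sqrt (Nat.cast_nonneg D)]; simp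
  let w : Fin C ⊕ Fin D → EuclideanSpace ℂ (Fin A × Fin B) := Sum.elim v (fun _ => 0)
  have how : Orthonormal ℂ ((Set.range (Sum.inl : Fin C → Fin C ⊕ Fin D)).domRestrict w) := by
    rw [orthonormal_iff_ite] at ho ⊢
    rintro ⟨_, c, rfl⟩ ⟨_, c', rfl⟩
    have := ho c c'
    by_cases e : c = c'
    · subst e
      rw [if_pos rfl] at this ⊢
      exact this
    · rw [if_neg e] at this
      rw [if_neg (fun h => e (Sum.inl_injective (Subtype.ext_iff.1 h)))]
      exact this
  have hcard : Module.finrank ℂ (EuclideanSpace ℂ (Fin A × Fin B)) =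
      Fintype.card (Fin C ⊕ Fin D) := by simp [hCD]
  obtain ⟨b, hb⟩ := how.exists_orthonormalBasis_extension_of_card_eq hcard
  -- completeness
  have hcomp : ∀ p q : Fin A × Fin B,
      ∑ c, C * (ψ (p.1, p.2, c) * conj (ψ (q.1, q.2, c))) +
      ∑ d, (b (Sum.inr d) p) * conj (b (Sum.inr d) q) = if p = q then 1 else 0 := by
    intro p q
    have := b.sum_inner_mul_inner (EuclideanSpace.single p (1:ℂ)) (EuclideanSpace.single q (1:ℂ))
    rw [Fintype.sum_sum_type] at this
    simp only [EuclideanSpace.inner_single_left, EuclideanSpace.inner_single_right, map_one,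
      one_mul] at this
    rw [PiLp.single_apply] at this
    have hq : (starRingEnd ℂ) (if q = p then 1 else 0) = if p = q then 1 else 0 := by
      by_cases e : p = q
      · simp [e]
      · simp [e, Ne.symm e]
    rw [hq] at this
    rw [← this]
    congr 1
    refine Finset.sum_congr rfl fun c _ => ?_
    rw [hb _ ⟨c, rfl⟩]
    simp only [w, Sum.elim_inl, hv, map_mul, Complex.conj_ofReal]
    rw [← hs]; ring
  let φ : Fin A × Fin B × Fin D → ℂ := fun x =>
    ((Real.sqrt D : ℝ) : ℂ)⁻¹ * b (Sum.inr x.2.2) (x.1, x.2.1)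
  have hφ : ∀ x y, φ x * conj (φ y) = 1 / D *
      (b (Sum.inr x.2.2) (x.1, x.2.1) * conj (b (Sum.inr y.2.2) (y.1, y.2.1))) := by
    intro x y
    simp only [φ, map_mul, map_inv₀, Complex.conj_ofReal]
    rw [← ht]; ring
  have hcomp' : ∀ p q : Fin A × Fin B, ∑ d, φ (p.1, p.2, d) * conj (φ (q.1, q.2, d)) =
      1 / D * ((if p = q then 1 else 0) - C * ∑ c, ψ (p.1, p.2, c) * conj (ψ (q.1, q.2, c))) := by
    intro p q
    simp only [hφ]
    rw [← hcomp p q, ← Finset.mul_sum, ← Finset.mul_sum]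
    ring
  have e3 : rho3 φ = (1 / (D : ℂ)) • 1 := by
    ext d d'
    simp only [rho3, Matrix.of_apply, Matrix.smul_apply, Matrix.one_apply, smul_eq_mul, hφ]
    have := (orthonormal_iff_ite.1 b.orthonormal) (Sum.inr d') (Sum.inr d)
    rw [PiLp.inner_apply, Fintype.sum_prod_type] at this
    simp only [RCLike.inner_apply] at this
    simp only [← Finset.mul_sum]
    rw [this]
    simp [eq_comm]
  refine ⟨φ, sf_norm hD _ e3, ?_, ?_, e3⟩
  · ext a a'
    have hh := congrFun (congrFun h1 a) a'
    simp only [rho1, Matrix.of_apply, Matrix.smul_apply, Matrix.one_apply, smul_eq_mul] at hh ⊢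
    rw [Finset.sum_congr rfl (fun x _ => hcomp' (a, x) (a', x))]
    rw [← Finset.mul_sum, Finset.sum_sub_distrib, ← Finset.mul_sum, hh]
    by_cases e : a = a'
    · subst e
      simp
      field_simp
      linear_combination -hCDc
    · simp [e]
  · ext x x'
    have hh := congrFun (congrFun h2 x) x'
    simp only [rho2, Matrix.of_apply, Matrix.smul_apply, Matrix.one_apply, smul_eq_mul] at hh ⊢
    rw [Finset.sum_congr rfl (fun a _ => hcomp' (a, x) (a, x'))]
    rw [← Finset.mul_sum, Finset.sum_sub_distrib, ← Finset.mul_sum, hh]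
    by_cases e : x = x'
    · subst e
      simp
      field_simp
      linear_combination -hCDc
    · simp [e]

lemma sf_parity (x y z : ℤ) (h : x * y * z - x ^ 2 - y ^ 2 - z ^ 2 + 2 < 0) :
    x * y * z - x ^ 2 - y ^ 2 - z ^ 2 + 4 ≤ 0 := by
  by_contra hc
  have h3 : x * y * z - x ^ 2 - y ^ 2 - z ^ 2 + 3 = 0 := by omega
  have h4 : ((x : ZMod 4) * y * z - x ^ 2 - y ^ 2 - z ^ 2 + 3) = 0 := by
    exact_mod_cast congrArg (Int.cast : ℤ → ZMod 4) h3
  generalize (x : ZMod 4) = x at h4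
  generalize (y : ZMod 4) = y at h4
  generalize (z : ZMod 4) = z at h4
  revert x y z
  decide

def sfSeq (A b c : ℕ) : ℕ → ℕ × ℕ
  | 0 => (b, c)
  | n + 1 => ((sfSeq A b c n).2, A * (sfSeq A b c n).2 - (sfSeq A b c n).1)

lemma sf_seq (A b c : ℕ) (hA : 2 ≤ A) (h : b + c ≤ A * c) :
    ∃ f : ℕ → ℕ, (∀ j, 1 ≤ j → f (j + 1) + f (j - 1) = A * f j) ∧ f 0 = b ∧ f 1 = c := by
  have inv : ∀ n, (sfSeq A b c n).1 + (sfSeq A b c n).2 ≤ A * (sfSeq A b c n).2 := by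
    intro n
    induction n with
    | zero => exact h
    | succ n ih =>
      simp only [sfSeq]
      generalize (sfSeq A b c n).1 = u at *
      generalize (sfSeq A b c n).2 = v at *
      have h1 : v ≤ A * v - u := by omega
      generalize A * v - u = e at *
      nlinarith
  refine ⟨fun n => (sfSeq A b c n).1, ?_, rfl, rfl⟩
  intro j hj
  obtain ⟨n, rfl⟩ : ∃ n, j = n + 1 := ⟨j - 1, by omega⟩
  have := inv n
  simp only [sfSeq, Nat.add_sub_cancel]
  omega

lemma sf_main (A : ℕ) (hA : 2 ≤ A) : ∀ (n b c : ℕ), b + c ≤ n → 1 ≤ b → b ≤ c →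
    TriLMEExists A b c → (A : ℤ) * b * c - (A : ℤ) ^ 2 - (b : ℤ) ^ 2 - (c : ℤ) ^ 2 + 4 ≤ 0 →
    ∃ (f : ℕ → ℕ) (i : ℕ),
      (∀ j, 1 ≤ j → f (j + 1) + f (j - 1) = A * f j) ∧
      b = f i ∧ c = f (i + 1) ∧
      ((∃ k, 1 ≤ k ∧ f 0 = k ∧ f 1 = k * A) ∨ SApair A (f 0) (f 1)) := by
  intro n
  induction n with
  | zero => intro b c h1 h2; omega
  | succ n ih =>
    intro b c hn hb hbc hex hD
    have hle := sf_le (by omega) hex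
    have hcyc := sf_cyc (by omega) hex
    have hle2 := sf_le (by omega) hcyc
    have h2c : 2 * c ≤ A * c := Nat.mul_le_mul_right c hA
    by_cases h0 : c = A * b
    · obtain ⟨f, hf, f0, f1⟩ := sf_seq A b c hA (by omega)
      exact ⟨f, 0, hf, f0.symm, f1.symm, Or.inl ⟨b, hb, f0, by rw [f1, h0, mul_comm]⟩⟩
    by_cases h2 : 2 * c ≤ A * b
    · obtain ⟨f, hf, f0, f1⟩ := sf_seq A b c hA (by omega)
      refine ⟨f, 0, hf, f0.symm, f1.symm, Or.inr ?_⟩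
      rw [f0, f1]
      exact ⟨hb, by omega, by omega, h2, hle2, hD, hcyc⟩
    obtain ⟨e, he⟩ : ∃ e, c + e = A * b := ⟨A * b - c, by omega⟩
    have hex' : TriLMEExists A e b :=
      sf_swap hb (sf_castle (by omega) hb (by omega) (by omega) he hex)
    have hD' : (A : ℤ) * e * b - (A : ℤ) ^ 2 - (e : ℤ) ^ 2 - (b : ℤ) ^ 2 + 4 ≤ 0 := by
      have hez : (c : ℤ) = A * b - e := by
        have : (c : ℤ) + e = A * b := by exact_mod_cast he
        linarith
      rw [hez] at hD
      nlinarith [hD]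
    have key : ∃ (f : ℕ → ℕ) (i : ℕ),
      (∀ j, 1 ≤ j → f (j + 1) + f (j - 1) = A * f j) ∧
      e = f i ∧ b = f (i + 1) ∧
      ((∃ k, 1 ≤ k ∧ f 0 = k ∧ f 1 = k * A) ∨ SApair A (f 0) (f 1)) := by
      by_cases heb : e ≤ b
      · exact ih e b (by omega) (by omega) heb hex' hD'
      · obtain ⟨f, hf, f0, f1⟩ := sf_seq A e b hA (by omega)
        refine ⟨f, 0, hf, f0.symm, f1.symm, Or.inr ?_⟩
        rw [f0, f1]
        have hcyc' := sf_cyc (by omega) hex'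
        have : 2 * e ≤ A * e := Nat.mul_le_mul_right e hA
        exact ⟨by omega, hb, by omega, by omega, sf_le (by omega) hcyc', hD', hcyc'⟩
    obtain ⟨f, i, hf, hi, hi1, hS⟩ := key
    refine ⟨f, i + 1, hf, hi1, ?_, hS⟩
    have := hf (i + 1) (by omega)
    simp only [Nat.add_sub_cancel] at this
    rw [← hi, ← hi1] at this
    omega

/-- sporadic nonempty cases with Δ < 0 lie on Fibonacci-like
sequences f(j+1) = A·f(j) − f(j−1) started from (k, kA) or from a pair in S_A. -/
theorem sporadic_fibonacci (A d₂ d₃ : ℕ) (hA : 2 ≤ A) (h12 : A ≤ d₂)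
    (h23 : d₂ ≤ d₃) (hex : TriLMEExists A d₂ d₃)
    (hΔ : Dfun ![A, d₂, d₃] < 0) :
    ∃ (f : ℕ → ℕ) (i : ℕ),
      (∀ j, 1 ≤ j → f (j + 1) + f (j - 1) = A * f j) ∧
      d₂ = f i ∧ d₃ = f (i + 1) ∧
      ((∃ k, 1 ≤ k ∧ f 0 = k ∧ f 1 = k * A) ∨ SApair A (f 0) (f 1)) := by
  have hΔ' : (A : ℤ) * d₂ * d₃ - (A : ℤ) ^ 2 - (d₂ : ℤ) ^ 2 - (d₃ : ℤ) ^ 2 + 2 < 0 := by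
    simp [Dfun, Fin.prod_univ_succ, Fin.sum_univ_succ] at hΔ
    linarith
  exact sf_main A hA (d₂ + d₃) d₂ d₃ le_rfl (by omega) h23 hex (sf_parity _ _ _ hΔ')
end
end
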